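/- arXiv:2208.09943 — 2 statements merged into one kernel-verified Lean document; each statement's English description precedes it below -/
import Mathlib

section
/- Let D be a Cartan subalgebra of a C*-algebra A and J a regular ideal of A. Then D/(J ∩ D) is a Cartan subalgebra of A/J. -/
/-!
For a regular ideal `J` of a Cartan pair `(A, D)` with conditional expectation `E`, everything
follows from one fact, `mem_of_ann_inter`: an element `x` lies in `J` as soon as `k x = 0` for all
`k ∈ J^⊥ ∩ D`.  For such `k`:

* if `a` commutes with `D` modulo `J`, then `k a` commutes with `D`, so `k a ∈ D` and
  `k (a - E a) = k a - E (k a) = 0`, whence `a - E a ∈ J`;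
* if `x ∈ J`, then `k (E x) = E (k x) = 0`, so `E` maps `J` into `J`;
* if `E (a* a) ∈ J`, then `E ((a k*)* (a k*)) = k E(a* a) k* = 0`, so `a k* = 0` by faithfulness.

To prove that fact, note that the right annihilator of `J^⊥ ∩ D` is a two-sided ideal, because the
normalizers of `D` span a dense subspace.  Its intersection `I` with `J^⊥` meets `D` only in `0`,
and one has to see that `I = 0`, which then makes `x` annihilate `J^⊥`.  This is
`ideal_eq_zero`, a form of the ideal intersection property of Cartan pairs.
If `0 ≠ a ∈ I` is positive, approximate it by a combination `s` of normalizers.  Since `D` is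
maximal abelian, there is a nonzero positive `p ∈ D`, supported where `E a` is nearly maximal, with
`p (s - E s) p = 0` (`exists_corner_span`).  Thus `p a p` is close to `p (E a) p`, and cutting down
once more gives a nonzero `g ∈ D` such that `g³` is dominated by an element of `I`.  As `I` is
killed by an annihilator which detects elements of `D`, this forces `g = 0`.

The corner lemma rests on `local_operator`: a bounded operator on a commutative C*-algebra which
preserves orthogonality is a module map, seen on the Gelfand spectrum of the unitization.  It shows
that if no nonzero multiple `d` of `h` has `d n d = 0`, then `h n` commutes with `D`.
-/

/-- Two-sided annihilator of a subset of an algebra. -/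
def ann {A : Type*} [NonUnitalNonAssocSemiring A] (X : Set A) : Set A :=
  {a | ∀ x ∈ X, a * x = 0 ∧ x * a = 0}

/-- A (not necessarily closed) two-sided ideal, as a subset. -/
def IsAlgIdeal {A : Type*} [NonUnitalNonAssocSemiring A] (J : Set A) : Prop :=
  (0 : A) ∈ J ∧ (∀ x ∈ J, ∀ y ∈ J, x + y ∈ J) ∧ ∀ a : A, ∀ x ∈ J, a * x ∈ J ∧ x * a ∈ J

/-- A closed two-sided ideal. -/
def IsIdeal {A : Type*} [NonUnitalNormedRing A] (J : Set A) : Prop :=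
  IsAlgIdeal J ∧ IsClosed J

/-- A regular ideal: a closed two-sided ideal equal to its double annihilator. -/
def IsRegularIdeal {A : Type*} [NonUnitalNormedRing A] (J : Set A) : Prop :=
  IsIdeal J ∧ J = ann (ann J)

variable {A : Type*} [NonUnitalNormedRing A] [StarRing A] [CStarRing A] [CompleteSpace A]
  [NormedSpace ℂ A] [IsScalarTower ℂ A A] [SMulCommClass ℂ A A] [StarModule ℂ A]
  [PartialOrder A] [StarOrderedRing A]

/-- `B` is a (non-unital, closed, star-closed) C*-subalgebra of `A`. -/
def IsCStarSubalgebra (B : Set A) : Prop :=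
  (0 : A) ∈ B ∧ (∀ x ∈ B, ∀ y ∈ B, x + y ∈ B) ∧ (∀ x ∈ B, ∀ y ∈ B, x * y ∈ B) ∧
  (∀ (c : ℂ), ∀ x ∈ B, c • x ∈ B) ∧ (∀ x ∈ B, star x ∈ B) ∧ IsClosed B

/-- `B` contains an approximate unit for `A`. -/
def ContainsApproxUnit (B : Set A) : Prop :=
  ∀ a : A, ∀ ε > (0 : ℝ), ∃ b ∈ B, ‖b‖ ≤ 1 ∧ ‖a - b * a‖ < ε ∧ ‖a - a * b‖ < ε

/-- `B ⊆ A` is an inclusion of C*-algebras: a C*-subalgebra containing an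
approximate unit for `A`. -/
def IsCStarInclusion (B : Set A) : Prop :=
  IsCStarSubalgebra B ∧ ContainsApproxUnit B

/-- `n` is a normalizer of `B` in `A`: `nBn* ⊆ B` and `n*Bn ⊆ B`. -/
def IsNormalizer (B : Set A) (n : A) : Prop :=
  (∀ b ∈ B, n * b * star n ∈ B) ∧ (∀ b ∈ B, star n * b * n ∈ B)

/-- `B ⊆ A` is a regular inclusion: an inclusion whose normalizers span a dense
subspace of `A`. -/
def IsRegularInclusion (B : Set A) : Prop :=
  IsCStarInclusion B ∧
  closure (Submodule.span ℂ {n | IsNormalizer B n} : Set A) = Set.univ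

/-- `E : A → A` is a conditional expectation onto `B`. -/
def IsCondExp (B : Set A) (E : A → A) : Prop :=
  (∀ a, E a ∈ B) ∧ (∀ b ∈ B, E b = b) ∧
  (∀ x y, E (x + y) = E x + E y) ∧ (∀ (c : ℂ) (x : A), E (c • x) = c • E x) ∧
  (∀ a : A, 0 ≤ a → 0 ≤ E a) ∧ (∀ a, ‖E a‖ ≤ ‖a‖) ∧
  (∀ b ∈ B, ∀ a, E (b * a) = b * E a ∧ E (a * b) = E a * b)

/-- Faithfulness of a positive map: `E(a*a) = 0 → a = 0`. -/
def IsFaithful (E : A → A) : Prop := ∀ a, E (star a * a) = 0 → a = 0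

/-- `N` is a `*`-semigroup of normalizers of `B` with dense linear span in `A`. -/
def IsNormalizerSemigroup (B N : Set A) : Prop :=
  (∀ n ∈ N, IsNormalizer B n) ∧ (∀ n ∈ N, star n ∈ N) ∧
  (∀ m ∈ N, ∀ n ∈ N, m * n ∈ N) ∧
  closure (Submodule.span ℂ N : Set A) = Set.univ

/-- `K` is invariant under `N`: `nKn* ⊆ K` for all `n ∈ N`. -/
def InvariantUnder (N K : Set A) : Prop := ∀ n ∈ N, ∀ k ∈ K, n * k * star n ∈ K

/-- `E` is `N`-invariant: `E(nan*) = nE(a)n*` for all `n ∈ N`. -/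
def IsInvariantCondExp (N : Set A) (E : A → A) : Prop :=
  ∀ n ∈ N, ∀ a : A, E (n * a * star n) = n * E a * star n

/-- A closed two-sided ideal of the subalgebra `B`. -/
def IsIdealIn (B K : Set A) : Prop :=
  K ⊆ B ∧ (0 : A) ∈ K ∧ (∀ x ∈ K, ∀ y ∈ K, x + y ∈ K) ∧
  (∀ b ∈ B, ∀ x ∈ K, b * x ∈ K ∧ x * b ∈ K) ∧ IsClosed K

/-- A regular ideal of the subalgebra `B`: `K = K^{⊥_B ⊥_B}` with annihilators
computed inside `B`. -/
def IsRegularIdealIn (B K : Set A) : Prop :=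
  IsIdealIn B K ∧ K = ann (ann K ∩ B) ∩ B

/-- `B ⊆ A` has the ideal intersection property. -/
def HasIIP (B : Set A) : Prop :=
  ∀ J : Set A, IsIdeal J → J ≠ {0} → ∃ x ∈ J ∩ B, x ≠ 0

/-- `B ⊆ A` has the regular ideal intersection property. -/
def HasRIIP (B : Set A) : Prop :=
  ∀ J : Set A, IsRegularIdeal J → J ≠ {0} → ∃ x ∈ J ∩ B, x ≠ 0

/-- `D` is a Cartan subalgebra of `A` witnessed by the faithful conditional expectation
`E : A → D`: a regular inclusion with `D` maximal abelian. -/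
def IsCartan (D : Set A) (E : A → A) : Prop :=
  IsRegularInclusion D ∧ (∀ x ∈ D, ∀ y ∈ D, x * y = y * x) ∧
  (∀ a : A, (∀ d ∈ D, a * d = d * a) → a ∈ D) ∧
  IsCondExp D E ∧ IsFaithful E

/-! ### Local operators on commutative C*-algebras -/

/-- A bounded operator on a commutative C*-algebra which is local, in the sense that `θ c` is
orthogonal to everything orthogonal to `c`, is a module map.  At a character `φ`, the element
`(e - φ e) m` is approximated by elements vanishing near `φ`. -/
theorem local_operator {D : Type*} [NonUnitalCommCStarAlgebra D] (θ : D →L[ℂ] D)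
    (hθ : ∀ c g, c * g = 0 → θ c * g = 0) (e m : D) : θ (e * m) = e * θ m := by
  set Γ := gelfandStarTransform (Unitization ℂ D) with hΓ
  have hiso : ∀ u, ‖Γ u‖ = ‖u‖ := fun u =>
    (gelfandTransform_isometry (Unitization ℂ D)).norm_map_of_map_zero (map_zero _) u
  have hpt : ∀ (x : D) φ, ‖Γ (x : Unitization ℂ D) φ‖ ≤ ‖x‖ := fun x φ => by
    rw [← Unitization.norm_inr (𝕜 := ℂ) x, ← hiso]
    exact ContinuousMap.norm_coe_le_norm _ φ
  rw [← sub_eq_zero]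
  set x := θ (e * m) - e * θ m with hx
  rw [← norm_eq_zero, ← Unitization.norm_inr (𝕜 := ℂ) x, ← hiso, norm_eq_zero]
  ext φ
  by_contra hne
  simp only [ContinuousMap.zero_apply] at hne
  set u := Γ (e : Unitization ℂ D) with hu
  set τ := u φ with hτ
  have key : ∀ ε > (0 : ℝ), ‖Γ (x : Unitization ℂ D) φ‖ ≤ ‖θ‖ * (2 * ε * ‖m‖) := by
    intro ε hε
    -- `k` vanishes where `|u - τ| ≤ ε` and equals `1` where `|u - τ| ≥ 2ε`, while `g` is a bump at
    -- `φ` supported where `|u - τ| ≤ ε`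
    let k : C(WeakDual.characterSpace ℂ (Unitization ℂ D), ℂ) :=
      ⟨fun y => ((min 1 (max 0 (‖u y - τ‖ / ε - 1)) : ℝ) : ℂ), by fun_prop⟩
    let g : C(WeakDual.characterSpace ℂ (Unitization ℂ D), ℂ) :=
      ⟨fun y => ((max 0 (1 - ‖u y - τ‖ / ε) : ℝ) : ℂ), by fun_prop⟩
    have hkg : k * g = 0 := by
      ext y
      simp only [k, g, ContinuousMap.mul_apply, ContinuousMap.coe_mk, ContinuousMap.zero_apply]
      rw [← Complex.ofReal_mul, Complex.ofReal_eq_zero, mul_eq_zero]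
      rcases le_total (‖u y - τ‖ / ε) 1 with h | h
      · left; rw [max_eq_left (by linarith)]; simp
      · right; rw [max_eq_left (by linarith)]
    have hgφ : g φ = 1 := by simp [g, ← hτ]
    let v := u - algebraMap ℂ _ τ
    have hv : ∀ y, v y = u y - τ := fun y => by simp [v]
    have hsmall : ‖v * k - v‖ ≤ 2 * ε := by
      rw [ContinuousMap.norm_le _ (by positivity)]
      intro y
      have : (v * k - v) y = (u y - τ) * (((min 1 (max 0 (‖u y - τ‖ / ε - 1)) - 1 : ℝ)) : ℂ) := by
        simp [k, hv]; ring
      rw [this, norm_mul, Complex.norm_real]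
      rcases le_total (‖u y - τ‖) (2 * ε) with h | h
      · have h1 : ‖(min 1 (max 0 (‖u y - τ‖ / ε - 1)) - 1 : ℝ)‖ ≤ 1 := by
          rw [Real.norm_eq_abs, abs_le]
          have h2 : (0:ℝ) ≤ min 1 (max 0 (‖u y - τ‖ / ε - 1)) := by positivity
          have h3 : min 1 (max 0 (‖u y - τ‖ / ε - 1)) ≤ 1 := min_le_left _ _
          constructor <;> linarith
        calc _ ≤ ‖u y - τ‖ * 1 := by gcongr
          _ ≤ _ := by linarith
      · have : 2 ≤ ‖u y - τ‖ / ε := by rwa [le_div_iff₀ hε]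
        rw [min_eq_left]
        · simp; positivity
        · exact le_max_of_le_right (by linarith)
    -- `c` and `g'` are the products with `m` and `x`; they lie in `D`, which is an ideal of its
    -- unitization
    let c : D := (Γ.symm (v * k) * (m : Unitization ℂ D)).snd
    let g' : D := (Γ.symm g * (x : Unitization ℂ D)).snd
    have hc : (c : Unitization ℂ D) = Γ.symm (v * k) * (m : Unitization ℂ D) := by
      ext <;> simp [c]
    have hg' : (g' : Unitization ℂ D) = Γ.symm g * (x : Unitization ℂ D) := by
      ext <;> simp [g']
    have hcg : c * g' = 0 := by
      apply Unitization.inr_injective (R := ℂ)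
      rw [Unitization.inr_mul, hc, hg', mul_mul_mul_comm, ← map_mul, mul_assoc v, hkg]
      simp
    have h1 := congrArg (fun z : D => Γ (z : Unitization ℂ D) φ) (hθ c g' hcg)
    simp only [Unitization.inr_mul, hg', map_mul, ContinuousMap.mul_apply, Unitization.inr_zero,
      map_zero, ContinuousMap.zero_apply] at h1
    rw [show Γ (Γ.symm g) = g from Γ.apply_symm_apply g, hgφ, one_mul] at h1
    have h2 : Γ (θ c : Unitization ℂ D) φ = 0 := (mul_eq_zero.mp h1).resolve_right hne
    have h3 : ‖c - (e * m - τ • m)‖ ≤ 2 * ε * ‖m‖ := by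
      rw [← Unitization.norm_inr (𝕜 := ℂ), ← Unitization.norm_inr (𝕜 := ℂ) m]
      have : ((c - (e * m - τ • m) : D) : Unitization ℂ D) = Γ.symm (v * k - v) * (m : Unitization ℂ D) := by
        have hvs : Γ.symm v = (e : Unitization ℂ D) - algebraMap ℂ _ τ := by
          rw [StarAlgEquiv.symm_apply_eq]
          simp [v, hu, Algebra.algebraMap_eq_smul_one]
        rw [map_sub, sub_mul, ← hc, hvs, sub_mul, ← Algebra.smul_def]
        simp
      rw [this]
      refine (norm_mul_le _ _).trans ?_
      gcongr
      rw [← hiso]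
      rw [show Γ (Γ.symm (v * k - v)) = v * k - v from Γ.apply_symm_apply _]
      exact hsmall
    have h4 : Γ (x : Unitization ℂ D) φ = - Γ (θ (c - (e * m - τ • m)) : Unitization ℂ D) φ := by
      simp [hx, h2, hτ, hu]
    rw [h4, norm_neg]
    refine (hpt _ _).trans ((θ.le_opNorm _).trans ?_)
    gcongr
  have hpos : 0 < ‖Γ (x : Unitization ℂ D) φ‖ := norm_pos_iff.mpr hne
  have hM : 0 < ‖θ‖ * (2 * ‖m‖) + 1 := by positivity
  have := key (‖Γ (x : Unitization ℂ D) φ‖ / (‖θ‖ * (2 * ‖m‖) + 1)) (by positivity)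
  have h5 : ‖θ‖ * (2 * (‖Γ (x : Unitization ℂ D) φ‖ / (‖θ‖ * (2 * ‖m‖) + 1)) * ‖m‖)
      = ‖Γ (x : Unitization ℂ D) φ‖ * ((‖θ‖ * (2 * ‖m‖)) / (‖θ‖ * (2 * ‖m‖) + 1)) := by ring
  rw [h5] at this
  have h6 : (‖θ‖ * (2 * ‖m‖)) / (‖θ‖ * (2 * ‖m‖) + 1) < 1 := by
    rw [div_lt_one hM]; linarith
  nlinarith

section

variable {𝒜 : Type*} [NonUnitalCStarAlgebra 𝒜]

/-- A subset that is a C*-subalgebra, as a bundled star subalgebra. -/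
def IsCStarSubalgebra.toSubalgebra {D : Set 𝒜} (hD : IsCStarSubalgebra D) :
    NonUnitalStarSubalgebra ℂ 𝒜 where
  carrier := D
  zero_mem' := hD.1
  add_mem' := fun hx hy => hD.2.1 _ hx _ hy
  mul_mem' := fun hx hy => hD.2.2.1 _ hx _ hy
  smul_mem' := fun c x hx => hD.2.2.2.1 c x hx
  star_mem' := fun hx => hD.2.2.2.2.1 _ hx

/-- A compression `c ↦ T c T*` of `D` into itself that respects orthogonality is `D`-linear: it is a
local operator on the commutative C*-algebra `D`. -/
theorem local_multiplier {D : Set 𝒜} (hD : IsCStarSubalgebra D)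
    (hcomm : ∀ x ∈ D, ∀ y ∈ D, x * y = y * x) (T : 𝒜)
    (hT : ∀ c ∈ D, T * c * star T ∈ D)
    (hloc : ∀ c ∈ D, ∀ g ∈ D, c * g = 0 → g * T * c = 0) :
    ∀ e ∈ D, ∀ m ∈ D, T * (e * m) * star T = e * (T * m * star T) := by
  let B := hD.toSubalgebra
  have hB : IsClosed (B : Set 𝒜) := hD.2.2.2.2.2
  let _ : NonUnitalCommCStarAlgebra B :=
    { NonUnitalStarSubalgebra.nonUnitalCStarAlgebra B with
      mul_comm := fun x y => Subtype.ext (hcomm x x.2 y y.2) }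
  let θ : B →L[ℂ] B :=
    LinearMap.mkContinuous
      { toFun := fun c => ⟨T * c * star T, hT c c.2⟩
        map_add' := fun x y => Subtype.ext (by simp [mul_add, add_mul])
        map_smul' := fun c x => Subtype.ext (by
          change T * (c • (x : 𝒜)) * star T = c • (T * (x : 𝒜) * star T)
          rw [mul_smul_comm, smul_mul_assoc]) }
      (‖T‖ * ‖star T‖) (fun x => by
        change ‖T * (x : 𝒜) * star T‖ ≤ ‖T‖ * ‖star T‖ * ‖(x : 𝒜)‖
        calc _ ≤ ‖T‖ * ‖(x : 𝒜)‖ * ‖star T‖ :=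
              (norm_mul_le _ _).trans (by gcongr; exact norm_mul_le _ _)
          _ = _ := by ring)
  have hθ : ∀ c g : B, c * g = 0 → θ c * g = 0 := by
    intro c g hcg
    have h1 : (c : 𝒜) * g = 0 := congrArg Subtype.val hcg
    apply Subtype.ext
    change T * (c : 𝒜) * star T * (g : 𝒜) = 0
    rw [hcomm _ (hT c c.2) g g.2, ← mul_assoc, ← mul_assoc, hloc c c.2 g g.2 h1, zero_mul]
  intro e he m hm
  exact congrArg Subtype.val (local_operator θ hθ ⟨e, he⟩ ⟨m, hm⟩)

theorem mul_right_eq_zero_of_approx {D : Set 𝒜} (hap : ContainsApproxUnit D) (x : 𝒜)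
    (h : ∀ d ∈ D, x * d = 0) : x = 0 := by
  by_contra hx
  obtain ⟨b, hb, -, -, h2⟩ := hap x ‖x‖ (norm_pos_iff.mpr hx)
  rw [h b hb, sub_zero] at h2
  exact lt_irrefl _ h2

theorem mul_star_self_zero {x : 𝒜} (h : x * star x = 0) : x = 0 :=
  CStarRing.mul_star_self_eq_zero_iff x |>.mp h

theorem star_mul_self_zero {x : 𝒜} (h : star x * x = 0) : x = 0 :=
  CStarRing.star_mul_self_eq_zero_iff x |>.mp h

/-- If `T D T* ⊆ D` and `T` does not connect orthogonal elements of `D`, then `T` commutes with `D`: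
`D`-linearity of `c ↦ T c T*` gives `(Te - eT) m T* = 0` for all `m ∈ D`, and therefore
`(Te - eT) r r* (Te - eT)* = 0` for all `r ∈ D`. -/
theorem commute_of_local {D : Set 𝒜} (hD : IsCStarInclusion D)
    (hcomm : ∀ x ∈ D, ∀ y ∈ D, x * y = y * x) (T : 𝒜)
    (hT : ∀ c ∈ D, T * c * star T ∈ D)
    (hloc : ∀ c ∈ D, ∀ g ∈ D, c * g = 0 → g * T * c = 0) :
    ∀ e ∈ D, T * e = e * T := by
  intro e he
  have key := local_multiplier hD.1 hcomm T hT hloc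
  obtain ⟨⟨h0, hadd, hmul, hsmul, hstar, hcl⟩, hap⟩ := hD
  rw [← sub_eq_zero]
  apply mul_right_eq_zero_of_approx hap
  intro r hr
  apply mul_star_self_zero
  have h1 : ∀ m ∈ D, (T * e - e * T) * m * star T = 0 := by
    intro m hm
    have := key e he m hm
    rw [sub_mul, sub_mul, sub_eq_zero]
    simpa only [mul_assoc] using this
  have h2 := h1 (r * star r) (hmul _ hr _ (hstar _ hr))
  have h3 := h1 (r * star r * star e) (hmul _ (hmul _ hr _ (hstar _ hr)) _ (hstar _ he))
  calc (T * e - e * T) * r * star ((T * e - e * T) * r)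
      = (T * e - e * T) * (r * star r * star e) * star T
        - (T * e - e * T) * (r * star r) * star T * star e := by
        simp only [star_mul, star_sub, mul_sub, sub_mul, mul_assoc]
    _ = 0 := by rw [h2, h3]; simp

/-! ### Annihilators of ideals -/

/-- Left and right annihilators of an ideal coincide, as a C*-algebra is semiprime. -/
theorem mul_eq_zero_swap {J : Set 𝒜} (hJ : IsAlgIdeal J) {x : 𝒜} (hx : ∀ j ∈ J, j * x = 0) :
    ∀ j ∈ J, x * j = 0 := by
  intro j hj
  apply mul_star_self_zero
  apply mul_star_self_zero
  have h1 : j * star (x * j) * x = 0 := hx _ (hJ.2.2 _ _ hj).2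
  calc x * j * star (x * j) * star (x * j * star (x * j))
      = x * (j * star (x * j) * x) * j * star (x * j) := by
        simp only [star_mul, star_star, mul_assoc]
    _ = 0 := by rw [h1]; simp

theorem isAlgIdeal_ann {J : Set 𝒜} (hJ : IsAlgIdeal J) : IsAlgIdeal (ann J) := by
  refine ⟨fun x _ => by simp, fun x hx y hy j hj => ?_, fun a x hx => ⟨fun j hj => ?_, fun j hj => ?_⟩⟩
  · simp [add_mul, mul_add, hx j hj, hy j hj]
  · exact ⟨by rw [mul_assoc, (hx j hj).1, mul_zero],
      by rw [← mul_assoc, (hx _ (hJ.2.2 a j hj).2).2]⟩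
  · exact ⟨by rw [mul_assoc, (hx _ (hJ.2.2 a j hj).1).1],
      by rw [← mul_assoc, (hx j hj).2, zero_mul]⟩

/-- Annihilators of ideals are closed under the involution, even if the ideal is not assumed to be. -/
theorem star_mem_ann {J : Set 𝒜} (hJ : IsAlgIdeal J) {x : 𝒜} (hx : x ∈ ann J) :
    star x ∈ ann J := by
  intro j hj
  constructor
  · apply star_mul_self_zero
    have h1 : x * (star x * j) = 0 := by
      have := ((isAlgIdeal_ann hJ).2.2 (star x) x hx).2
      rw [← mul_assoc]; exact (this j hj).1
    rw [star_mul, star_star, mul_assoc, h1, mul_zero]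
  · apply mul_star_self_zero
    have h1 : j * star x * x = 0 := by
      have := ((isAlgIdeal_ann hJ).2.2 (star x) x hx).1
      rw [mul_assoc]; exact (this j hj).2
    rw [star_mul, star_star, ← mul_assoc, h1, zero_mul]

/-! ### Corners on which a normalizer agrees with its expectation -/

/-- `n* n` is the limit of `n* b n` for `b` in an approximate unit contained in `D`. -/
theorem IsNormalizer.star_mul_self_mem {D : Set 𝒜} (hD : IsCStarInclusion D) {n : 𝒜}
    (hn : IsNormalizer D n) : star n * n ∈ D := by
  obtain ⟨⟨h0, hadd, hmul, hsmul, hstar, hcl⟩, hap⟩ := hD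
  rw [← hcl.closure_eq, Metric.mem_closure_iff]
  intro ε hε
  obtain ⟨b, hb, -, h1, -⟩ := hap n (ε / (‖star n‖ + 1)) (by positivity)
  refine ⟨star n * b * n, hn.2 b hb, ?_⟩
  rw [dist_eq_norm, mul_assoc, ← mul_sub]
  have h2 : 0 < ‖star n‖ + 1 := by positivity
  rw [lt_div_iff₀ h2] at h1
  have := norm_mul_le (star n) (n - b * n)
  nlinarith [norm_nonneg (n - b * n)]

variable [PartialOrder 𝒜]

theorem IsCondExp.map_sub {D : Set 𝒜} {E : 𝒜 → 𝒜} (hE : IsCondExp D E) (x y : 𝒜) :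
    E (x - y) = E x - E y := by
  obtain ⟨-, -, hadd, hsm, -⟩ := hE
  rw [sub_eq_add_neg, ← neg_one_smul ℂ y, hadd, hsm, neg_one_smul, ← sub_eq_add_neg]

/-- Every nonzero `h ∈ D` has a nonzero multiple `d = h q` in `D` with `d (n - E n) d = 0`.  Either
some `d ≠ 0` satisfies `d n d = 0`, the case where `n` moves a point of the support of `h`;
or `h n` commutes with `D`, the case where `n` acts trivially there, and `h (n - E n) = 0`. -/
theorem exists_corner_normalizer {D : Set 𝒜} {E : 𝒜 → 𝒜} (hD : IsCartan D E) {n h : 𝒜}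
    (hn : IsNormalizer D n) (hh : h ∈ D) (h0 : h ≠ 0) :
    ∃ q ∈ D, h * q ≠ 0 ∧ h * q * (n - E n) * (h * q) = 0 := by
  obtain ⟨⟨hinc, -⟩, hcomm, hmasa, ⟨hED, hEid, hEadd, hEsm, hEpos, hEnorm, hEmod⟩, -⟩ := hD
  obtain ⟨hsub, hap⟩ := id hinc
  obtain ⟨hz, hadd, hmul, hsmul, hstar, hcl⟩ := id hsub
  by_contra! hcon
  have hE0 : E 0 = 0 := hEid 0 hz
  have hq0 : ∀ q ∈ D, h * q * n * (h * q) = 0 → h * q = 0 := by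
    intro q hq hqn
    by_contra hne
    have hd := hmul _ hh _ hq
    apply hcon q hq hne
    rw [mul_sub, sub_mul, hqn, zero_sub, neg_eq_zero, ← (hEmod _ hd n).1, ← (hEmod _ hd _).2, hqn,
      hE0]
  -- with `z = (hg)(n c c* n*)(hg)*` one has `z n z = 0`, so `z = 0`, that is `h g n c = 0`
  have hloc : ∀ c ∈ D, ∀ g ∈ D, c * g = 0 → g * (h * n) * c = 0 := by
    intro c hc g hg hcg
    have hhg := hmul _ hh _ hg
    have hcc := hmul _ hc _ (hstar _ hc)
    have hs := hn.1 _ hcc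
    have hnn := hn.star_mul_self_mem hinc
    set s := n * (c * star c) * star n with hsdef
    have hsn : s * n = n * (star n * n) * (c * star c) := by
      rw [hsdef, mul_assoc, mul_assoc, hcomm _ hcc _ hnn]
      simp only [mul_assoc]
    have hch : c * star c * (h * g) = 0 := by
      rw [hcomm _ hh _ hg, mul_assoc, ← mul_assoc (star c), hcomm _ (hstar _ hc) _ hg,
        ← mul_assoc, ← mul_assoc, hcg]
      simp
    have hz1 := hq0 (g * s * star (h * g)) (hmul _ (hmul _ hg _ hs) _ (hstar _ hhg)) (by
      have e1 : h * (g * s * star (h * g)) = (h * g) * star (h * g) * s := by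
        rw [mul_assoc g, hcomm s hs _ (hstar _ hhg)]; simp only [mul_assoc]
      have e2 : h * (g * s * star (h * g)) = (h * g) * (s * star (h * g)) := by
        simp only [mul_assoc]
      rw [mul_assoc _ n]
      nth_rewrite 1 [e1]
      rw [e2]
      calc _ = (h * g) * star (h * g) * (s * n) * (h * g) * (s * star (h * g)) := by
            simp only [mul_assoc]
        _ = (h * g) * star (h * g) * (n * (star n * n)) * (c * star c * (h * g)) *
              (s * star (h * g)) := by rw [hsn]; simp only [mul_assoc]
        _ = 0 := by rw [hch]; simp)
    have : h * g * n * c = 0 := by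
      apply mul_star_self_zero
      rw [← hz1, hsdef]
      simp only [star_mul, mul_assoc]
    rw [← mul_assoc, hcomm _ hg _ hh, this]
  have hTc := commute_of_local hinc hcomm (h * n) (fun c hc => by
    have := hmul _ (hmul _ hh _ (hn.1 c hc)) _ (hstar _ hh)
    rw [star_mul]
    simpa only [mul_assoc] using this) hloc
  -- `h n` commutes with `D`, so `h n = E (h n) = h (E n)` and the corner by `h h*` vanishes
  have hmem := hmasa _ hTc
  have hE := hEid _ hmem
  rw [(hEmod _ hh n).1] at hE
  have hhs := hmul _ hh _ (hstar _ hh)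
  refine hcon (star h) (hstar _ hh) (fun h' => h0 (mul_star_self_zero h')) ?_
  rw [hcomm _ hh _ (hstar _ hh), mul_assoc (star h) h, mul_sub, hE]
  simp

/-- The same for a finite combination of normalizers, shrinking `h` once for each summand. -/
theorem exists_corner_span {D : Set 𝒜} {E : 𝒜 → 𝒜} (hD : IsCartan D E) {s : 𝒜}
    (hs : s ∈ Submodule.span ℂ {n | IsNormalizer D n}) :
    ∀ h ∈ D, h ≠ 0 → ∃ q ∈ D, h * q ≠ 0 ∧ h * q * (s - E s) * (h * q) = 0 := by
  obtain ⟨hz, hadd, hmul, hsmul, hstar, hcl⟩ := hD.1.1.1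
  have hcomm := hD.2.1
  obtain ⟨hED, hEid, hEadd, hEsm, hEpos, hEnorm, hEmod⟩ := hD.2.2.2.1
  induction hs using Submodule.span_induction with
  | mem n hn => exact fun h hh h0 => exists_corner_normalizer hD hn hh h0
  | zero =>
    intro h hh h0
    exact ⟨star h, hstar _ hh, fun h' => h0 (mul_star_self_zero h'), by simp [hEid 0 hz]⟩
  | add x y _ _ ihx ihy =>
    intro h hh h0
    obtain ⟨q, hq, hq0, hqx⟩ := ihx h hh h0
    obtain ⟨r, hr, hr0, hry⟩ := ihy (h * q) (hmul _ hh _ hq) hq0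
    refine ⟨q * r, hmul _ hq _ hr, by rwa [← mul_assoc], ?_⟩
    have e1 : x + y - E (x + y) = (x - E x) + (y - E y) := by rw [hEadd]; abel
    rw [e1, ← mul_assoc h, mul_add, add_mul, hry, add_zero,
      hcomm _ (hmul _ hh _ hq) _ hr, mul_assoc r, mul_assoc r, ← hcomm _ (hmul _ hh _ hq) _ hr,
      ← mul_assoc _ _ r, hqx]
    simp
  | smul c x _ ih =>
    intro h hh h0
    obtain ⟨q, hq, hq0, hqx⟩ := ih h hh h0
    refine ⟨q, hq, hq0, ?_⟩
    rw [hEsm, ← smul_sub, mul_smul_comm, smul_mul_assoc, hqx, smul_zero]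

/-! ### Ideal intersection and regular ideals -/

variable [StarOrderedRing 𝒜]

/-- The element `v * v` is `(b - δ)₊`, and the last identity is `f b f = δ f² + f³` for `f = (b - δ)₊`. -/
theorem exists_cutoff {D : Set 𝒜} (hD : IsCStarSubalgebra D) {b : 𝒜} (hbD : b ∈ D) (hb : 0 ≤ b)
    {δ : ℝ} (hδ : 0 ≤ δ) (hδb : δ < ‖b‖) :
    ∃ v ∈ D, star v = v ∧ v * v ≠ 0 ∧
      (v * v) * b * (v * v) = δ • ((v * v) * (v * v)) + (v * v) * (v * v) * (v * v) := by
  let B := hD.toSubalgebra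
  have hB : IsClosed (B : Set 𝒜) := hD.2.2.2.2.2
  have hsa : IsSelfAdjoint b := .of_nonneg hb
  let r : ℝ → ℝ := fun t => √(max (t - δ) 0)
  let f : ℝ → ℝ := fun t => max (t - δ) 0
  have hr0 : r 0 = 0 := by simp [r, hδ]
  have hf0 : f 0 = 0 := by simp [f, hδ]
  have hrc : Continuous r := by fun_prop
  have hfc : Continuous f := by fun_prop
  have hvv : cfcₙ r b * cfcₙ r b = cfcₙ f b := by
    rw [← cfcₙ_mul r r b hrc.continuousOn hr0 hrc.continuousOn hr0]
    congr 1
    ext t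
    exact Real.mul_self_sqrt (le_max_right _ _)
  refine ⟨cfcₙ r b, cfcₙ_mem (𝕜' := ℂ) (s := B) r hbD, IsSelfAdjoint.cfcₙ, ?_, ?_⟩
  · intro hzero
    rw [hvv] at hzero
    have h1 : ‖cfcₙ (fun t => t - f t) b‖ ≤ δ := by
      apply norm_cfcₙ_le
      intro t ht
      have ht0 : 0 ≤ t := quasispectrum_nonneg_of_nonneg b hb t ht
      simp only [f, Real.norm_eq_abs]
      rw [abs_le]
      rcases le_total (t - δ) 0 with h | h
      · rw [max_eq_right h]; constructor <;> linarith
      · rw [max_eq_left h]; constructor <;> linarith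
    rw [cfcₙ_sub (fun t => t) f b continuousOn_id rfl hfc.continuousOn hf0, hzero, sub_zero,
      cfcₙ_id' ℝ b] at h1
    linarith
  · rw [hvv]
    have hff0 : f 0 * f 0 = 0 := by simp [hf0]
    have e1 : cfcₙ f b * b * cfcₙ f b = cfcₙ (fun t => f t * t * f t) b := by
      rw [cfcₙ_mul (fun t => f t * t) f b (by fun_prop) (by simp) hfc.continuousOn hf0,
        cfcₙ_mul f (fun t => t) b hfc.continuousOn hf0 continuousOn_id rfl, cfcₙ_id' ℝ b]
    have e2 : cfcₙ f b * cfcₙ f b = cfcₙ (fun t => f t * f t) b :=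
      (cfcₙ_mul f f b hfc.continuousOn hf0 hfc.continuousOn hf0).symm
    have e3 : cfcₙ f b * cfcₙ f b * cfcₙ f b = cfcₙ (fun t => f t * f t * f t) b := by
      rw [cfcₙ_mul (fun t => f t * f t) f b (by fun_prop) (by simp [hf0]) hfc.continuousOn hf0, e2]
    rw [e1, e3, e2, ← cfcₙ_smul δ (fun t => f t * f t) b (by fun_prop) (by simp [hf0]),
      ← cfcₙ_add (a := b) (fun t => δ • (f t * f t)) (fun t => f t * f t * f t) (by fun_prop)
        (by simp [hf0]) (by fun_prop) (by simp [hf0])]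
    congr 1
    ext t
    simp only [f, smul_eq_mul]
    rcases le_total (t - δ) 0 with h | h
    · rw [max_eq_right h]; ring
    · rw [max_eq_left h]; ring

/-- An ideal `I` killed on the left by a set `L` which kills no nonzero element of `D` is zero.
Since `L g = 0` with `g ∈ D` forces `g = 0`, it suffices to produce from a nonzero `a ∈ I` a
nonzero `g ∈ D` with `g³` dominated by an element of `I`. -/
theorem ideal_eq_zero {D : Set 𝒜} {E : 𝒜 → 𝒜} (hD : IsCartan D E) (I L : Set 𝒜)
    (hIl : ∀ a, ∀ x ∈ I, a * x ∈ I) (hIr : ∀ a, ∀ x ∈ I, x * a ∈ I)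
    (hLI : ∀ k ∈ L, ∀ x ∈ I, k * x = 0) (hLD : ∀ g ∈ D, (∀ k ∈ L, k * g = 0) → g = 0) :
    ∀ a ∈ I, a = 0 := by
  intro a₀ ha₀
  by_contra hne
  have hsub := hD.1.1.1
  obtain ⟨hz, hadd, hmul, hsmul, hstar, hcl⟩ := id hsub
  have hcomm := hD.2.1
  have hE := hD.2.2.2.1
  obtain ⟨hED, hEid, hEadd, hEsm, hEpos, hEnorm, hEmod⟩ := id hE
  set a := star a₀ * a₀ with ha
  have haI : a ∈ I := hIl _ _ ha₀
  have ha0 : 0 ≤ a := star_mul_self_nonneg a₀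
  set b := E a with hb
  have hb0 : 0 ≤ b := hEpos _ ha0
  have hbne : b ≠ 0 := fun h => hne (hD.2.2.2.2 _ h)
  have hβ : 0 < ‖b‖ := norm_pos_iff.mpr hbne
  -- `h = v²` is `(b - ‖b‖/2)₊`, so that `b ≥ ‖b‖/2` on the support of `h`
  obtain ⟨v, hvD, hvs, hvne, hvb⟩ :=
    exists_cutoff hsub (hED a) hb0 (δ := ‖b‖ / 2) (by positivity) (by linarith)
  have hdense := hD.1.2
  obtain ⟨s, hs, has⟩ := Metric.mem_closure_iff.mp (hdense ▸ Set.mem_univ a) (‖b‖ / 8)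
    (by positivity)
  rw [dist_eq_norm] at has
  set h := v * v with hh
  have hhD : h ∈ D := hmul _ hvD _ hvD
  have hhs : star h = h := by rw [hh, star_mul, hvs]
  obtain ⟨q, hq, hq0, hqs⟩ := exists_corner_span hD hs h hhD hvne
  have hdD := hmul _ hhD _ hq
  set d := h * q with hd
  set p := star d * d with hp
  have hpD : p ∈ D := hmul _ (hstar _ hdD) _ hdD
  have hps : star p = p := by simp [hp]
  have hp0 : p ≠ 0 := fun h' => hq0 (star_mul_self_zero h')
  have hpp0 : 0 ≤ p * p := by simpa [hps] using star_mul_self_nonneg p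
  have hppn : ‖p * p‖ = ‖p‖ * ‖p‖ := by
    have := CStarRing.norm_star_mul_self (x := p)
    rwa [hps] at this
  have hpn : 0 < ‖p‖ := norm_pos_iff.mpr hp0
  -- the corner of `s - E s` vanishes already between two copies of `d`, hence of `p = d*d`
  have hps0 : p * (s - E s) * p = 0 := by
    calc p * (s - E s) * p = star d * (d * (s - E s) * d) * star d := by
          rw [hp]; nth_rewrite 2 [hcomm _ (hstar _ hdD) _ hdD]; simp only [mul_assoc]
      _ = 0 := by rw [hqs]; simp
  -- `g = w²` is `(p² - ‖p²‖/2)₊`; on its support `p²` beats the error term `y` below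
  obtain ⟨w, hw, hws, hwne, hwb⟩ :=
    exists_cutoff hsub (hmul _ hpD _ hpD) hpp0 (δ := ‖p * p‖ / 2) (by positivity)
      (by rw [hppn]; nlinarith)
  set g := w * w with hg
  have hgD : g ∈ D := hmul _ hw _ hw
  have hgs : star g = g := by rw [hg, star_mul, hws]
  -- `p b p ≥ (‖b‖ / 2) p²`, because `p` is a multiple of the cut-off `h`
  have hpb : (‖b‖ / 2) • (p * p) ≤ p * b * p := by
    set z := q * star d with hzdef
    have hpz : p = h * z := by
      rw [hp, hcomm _ (hstar _ hdD) _ hdD, hd, hzdef, mul_assoc]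
    have hpz' : p = star z * h := by rw [← hps, hpz, star_mul, hhs]
    have h1 : p * b * p = star z * (h * b * h) * z := by
      nth_rewrite 1 [hpz']; rw [hpz]; simp only [mul_assoc]
    have h2 : p * p = star z * (h * h) * z := by
      nth_rewrite 1 [hpz']; rw [hpz]; simp only [mul_assoc]
    have h3 : star z * (h * h * h) * z = star (v * h * z) * (v * h * z) := by
      simp only [star_mul, hvs, hh, mul_assoc]
    rw [h1, h2, hvb, mul_add, add_mul, mul_smul_comm, smul_mul_assoc, h3]
    exact le_add_of_nonneg_right (star_mul_self_nonneg _)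
  -- `y` measures how far the corner of `a` is from the corner of `b = E a`
  set y := p * b * p - p * a * p with hy
  have hys : IsSelfAdjoint y := by
    have h1 : star a = a := (IsSelfAdjoint.of_nonneg ha0).star_eq
    have h2 : star b = b := (IsSelfAdjoint.of_nonneg hb0).star_eq
    simp only [IsSelfAdjoint, hy, star_sub, star_mul, hps, h1, h2, mul_assoc]
  have hyn : ‖y‖ ≤ ‖b‖ / 4 * ‖p * p‖ := by
    have h1 : y = p * (E (a - s) - (a - s)) * p := by
      have h2 : E (a - s) - (a - s) = (b - a) + (s - E s) := by rw [hE.map_sub, ← hb]; abel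
      rw [h2, mul_add, add_mul, hps0, add_zero, mul_sub, sub_mul]
    have h3 : ‖E (a - s) - (a - s)‖ ≤ ‖b‖ / 4 := by
      have := norm_sub_le (E (a - s)) (a - s)
      have := hEnorm (a - s)
      linarith
    rw [h1, hppn]
    calc _ ≤ ‖p‖ * ‖E (a - s) - (a - s)‖ * ‖p‖ :=
          (norm_mul_le _ _).trans (by gcongr; exact norm_mul_le _ _)
      _ ≤ ‖p‖ * (‖b‖ / 4) * ‖p‖ := by gcongr
      _ = _ := by ring
  have hgy : g * y * g ≤ (‖b‖ / 4 * ‖p * p‖) • (g * g) := by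
    have h1 := CStarAlgebra.star_left_conjugate_le_norm_smul (a := g) hys
    rw [hgs] at h1
    have h2 : 0 ≤ g * g := by simpa [hgs] using star_mul_self_nonneg g
    exact h1.trans (smul_le_smul_of_nonneg_right hyn h2)
  have hgpb : (‖b‖ / 2) • (g * (p * p) * g) ≤ g * (p * b * p) * g := by
    have h1 := star_left_conjugate_le_conjugate hpb g
    rwa [hgs, mul_smul_comm, smul_mul_assoc] at h1
  -- `g³` is dominated by an element of `I`, hence killed by `L`
  have hmain : (‖b‖ / 2) • (g * g * g) ≤ g * (p * a * p) * g := by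
    have h1 : g * (p * a * p) * g = g * (p * b * p) * g - g * y * g := by
      rw [hy, mul_sub, sub_mul]; abel
    have h2 : (‖b‖ / 2) • (g * g * g)
        = (‖b‖ / 2) • (g * (p * p) * g) - (‖b‖ / 4 * ‖p * p‖) • (g * g) := by
      rw [hwb, smul_add, smul_smul, add_comm, add_sub_assoc]
      rw [show ‖b‖ / 2 * (‖p * p‖ / 2) = ‖b‖ / 4 * ‖p * p‖ by ring, sub_self, add_zero]
    rw [h1, h2]
    exact sub_le_sub hgpb hgy
  have hgg : g * g = 0 := by
    refine hLD _ (hmul _ hgD _ hgD) fun k hk => ?_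
    have h1 := star_right_conjugate_le_conjugate hmain k
    have h2 : k * (g * (p * a * p) * g) = 0 := by
      refine hLI k hk _ ?_
      have : p * a * p ∈ I := hIr _ _ (hIl _ _ haI)
      exact hIr _ _ (hIl _ _ this)
    rw [h2, zero_mul, mul_smul_comm, smul_mul_assoc] at h1
    have h3 : k * (g * g * g) * star k = (k * (g * w)) * star (k * (g * w)) := by
      simp only [star_mul, hws, hg, mul_assoc]
    rw [h3] at h1
    have h4 := mul_star_self_nonneg (k * (g * w))
    have h5 : (‖b‖ / 2) • ((k * (g * w)) * star (k * (g * w))) = 0 :=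
      le_antisymm h1 (smul_nonneg (by positivity) h4)
    have h6 := mul_star_self_zero ((smul_eq_zero.mp h5).resolve_left (by positivity))
    calc k * (g * g) = k * (g * w) * w := by simp only [hg, mul_assoc]
      _ = 0 := by rw [h6, zero_mul]
  exact hwne (star_mul_self_zero (by rw [hgs]; exact hgg))

/-- A regular ideal `J` of a Cartan pair consists of the elements killed by `J^⊥ ∩ D`. -/
theorem mem_of_ann_inter {D : Set 𝒜} {E : 𝒜 → 𝒜} (hD : IsCartan D E) {J : Set 𝒜}
    (hJ : IsRegularIdeal J) {x : 𝒜} (hx : ∀ k ∈ ann J ∩ D, k * x = 0) : x ∈ J := by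
  have hJa := hJ.1.1
  have hK := isAlgIdeal_ann hJa
  have hstar := hD.1.1.1.2.2.2.2.1
  -- the right annihilator of `J^⊥ ∩ D` is a left ideal: this may be tested on normalizers `n`,
  -- for which `n* k* k n ∈ J^⊥ ∩ D`
  have hleft : ∀ z, (∀ k ∈ ann J ∩ D, k * z = 0) → ∀ a, ∀ k ∈ ann J ∩ D, k * (a * z) = 0 := by
    intro z hzk a
    let S : Submodule ℂ 𝒜 :=
      { carrier := {a | ∀ k ∈ ann J ∩ D, k * (a * z) = 0}
        add_mem' := fun {a b} ha hb k hk => by rw [add_mul, mul_add, ha k hk, hb k hk, add_zero]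
        zero_mem' := fun k _ => by simp
        smul_mem' := fun c a ha k hk => by rw [smul_mul_assoc, mul_smul_comm, ha k hk, smul_zero] }
    have hScl : IsClosed (S : Set 𝒜) := by
      change IsClosed {a | ∀ k ∈ ann J ∩ D, k * (a * z) = 0}
      simp only [Set.ofPred_forall]
      refine isClosed_iInter fun k => isClosed_iInter fun _ => ?_
      exact isClosed_eq (by fun_prop) continuous_const
    have hSn : Submodule.span ℂ {n | IsNormalizer D n} ≤ S := by
      rw [Submodule.span_le]
      intro n hn k hk
      apply star_mul_self_zero
      have hkk : star k * k ∈ D := hD.1.1.1.2.2.1 _ (hstar _ hk.2) _ hk.2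
      have h1 : star n * (star k * k) * n ∈ ann J ∩ D :=
        ⟨(hK.2.2 n _ (hK.2.2 (star n) _ (hK.2.2 (star k) k hk.1).1).1).2, hn.2 _ hkk⟩
      calc star (k * (n * z)) * (k * (n * z)) = star z * (star n * (star k * k) * n * z) := by
            simp only [star_mul, mul_assoc]
        _ = 0 := by rw [hzk _ h1, mul_zero]
    have : a ∈ closure (Submodule.span ℂ {n | IsNormalizer D n} : Set 𝒜) := by
      rw [hD.1.2]; trivial
    exact closure_minimal hSn hScl this
  -- the ideal of those `z ∈ J^⊥` that are killed by `J^⊥ ∩ D` is zero; its left annihilator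
  -- contains both `J` and `J^⊥ ∩ D`, and so detects every element of `D`
  have hzero := ideal_eq_zero hD {z | z ∈ ann J ∧ ∀ k ∈ ann J ∩ D, k * z = 0}
    (J ∪ (ann J ∩ D))
    (fun a z hz => ⟨(hK.2.2 a z hz.1).1, hleft z hz.2 a⟩)
    (fun a z hz => ⟨(hK.2.2 a z hz.1).2, fun k hk => by rw [← mul_assoc, hz.2 k hk, zero_mul]⟩)
    (by
      rintro k (hk | hk) z hz
      · exact (hz.1 k hk).2
      · exact hz.2 k hk)
    (fun g hg hgk => by
      have h1 : ∀ j ∈ J, j * g = 0 := fun j hj => hgk j (Or.inl hj)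
      have h2 : g ∈ ann J := fun j hj => ⟨mul_eq_zero_swap hJa h1 j hj, h1 j hj⟩
      exact star_mul_self_zero (hgk _ (Or.inr ⟨star_mem_ann hJa h2, hstar _ hg⟩)))
  have hxK : ∀ y ∈ ann J, y * x = 0 := fun y hy =>
    hzero _ ⟨(hK.2.2 x y hy).2, hleft x hx y⟩
  rw [hJ.2]
  exact fun y hy => ⟨mul_eq_zero_swap hK hxK y hy, hxK y hy⟩

/-- The result for bundled C*-algebras; all parts are checked by multiplying with `k ∈ J^⊥ ∩ D`. -/
theorem cartan_quotient_aux {D : Set 𝒜} {E : 𝒜 → 𝒜} (hD : IsCartan D E)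
    (J : Set 𝒜) (hJ : IsRegularIdeal J) :
    (∀ a : 𝒜, (∀ d ∈ D, a * d - d * a ∈ J) → ∃ d ∈ D, a - d ∈ J) ∧
    (∀ a : 𝒜, ∀ ε > (0 : ℝ),
      ∃ x ∈ (Submodule.span ℂ {n | IsNormalizer D n} : Submodule ℂ 𝒜),
        ∃ j ∈ J, ‖a - x - j‖ < ε) ∧
    (∀ a₁ a₂ : 𝒜, a₁ - a₂ ∈ J → E a₁ - E a₂ ∈ J ∩ D) ∧
    (∀ a : 𝒜, E (star a * a) ∈ J → a ∈ J) := by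
  have hJa := hJ.1.1
  have hstar := hD.1.1.1.2.2.2.2.1
  have hE := hD.2.2.2.1
  obtain ⟨hED, hEid, hEadd, hEsm, hEpos, hEnorm, hEmod⟩ := id hE
  have hE0 : E 0 = 0 := hEid 0 hD.1.1.1.1
  refine ⟨fun a ha => ⟨E a, hED a, mem_of_ann_inter hD hJ fun k hk => ?_⟩, fun a ε hε => ?_,
    fun a₁ a₂ h => ?_, fun a ha => ?_⟩
  · have hmem : k * a ∈ D := by
      refine hD.2.2.1 _ fun d hd => ?_
      have h1 := (hk.1 _ (ha d hd)).1
      rw [mul_sub, sub_eq_zero, ← mul_assoc, ← mul_assoc, hD.2.1 _ hk.2 _ hd] at h1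
      rw [h1, mul_assoc]
    have h2 := hEid _ hmem
    rw [(hEmod _ hk.2 a).1] at h2
    rw [mul_sub, h2, sub_self]
  · have : a ∈ closure (Submodule.span ℂ {n | IsNormalizer D n} : Set 𝒜) := by
      rw [hD.1.2]; trivial
    obtain ⟨x, hx, hax⟩ := Metric.mem_closure_iff.mp this ε hε
    exact ⟨x, hx, 0, hJa.1, by rwa [sub_zero, ← dist_eq_norm]⟩
  · rw [← hE.map_sub]
    refine ⟨mem_of_ann_inter hD hJ fun k hk => ?_, hED _⟩
    rw [← (hEmod _ hk.2 _).1, (hk.1 _ h).1, hE0]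
  · have hstarJ : star a ∈ J := by
      refine mem_of_ann_inter hD hJ fun k hk => ?_
      have h1 : a * star k = 0 := by
        apply hD.2.2.2.2
        have h2 : star (a * star k) * (a * star k) = k * (star a * a * star k) := by
          simp only [star_mul, star_star, mul_assoc]
        rw [h2, (hEmod _ hk.2 _).1, (hEmod _ (hstar _ hk.2) _).2, ← mul_assoc, (hk.1 _ ha).1,
          zero_mul]
      rw [← star_star (k * star a), star_mul, star_star, h1, star_zero]
    rw [hJ.2] at hstarJ ⊢
    simpa using star_mem_ann (isAlgIdeal_ann hJa) hstarJ

end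

/-- If `D` is a Cartan subalgebra of `A` and `J` is a regular ideal of `A`,
then `D/(J ∩ D)` is a Cartan subalgebra of `A/J`.  This is expressed modulo `J`:
`D/(J ∩ D)` is maximal abelian in `A/J`; the images of the normalizers of `D` span a dense
subspace of `A/J` (so the quotient inclusion is regular); and `E` descends to a
well-defined faithful conditional expectation of `A/J` onto `D/(J ∩ D)`. -/
theorem cartan_quotient {D : Set A} {E : A → A} (hD : IsCartan D E)
    (J : Set A) (hJ : IsRegularIdeal J) :
    (∀ a : A, (∀ d ∈ D, a * d - d * a ∈ J) → ∃ d ∈ D, a - d ∈ J) ∧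
    (∀ a : A, ∀ ε > (0 : ℝ),
      ∃ x ∈ (Submodule.span ℂ {n | IsNormalizer D n} : Submodule ℂ A),
        ∃ j ∈ J, ‖a - x - j‖ < ε) ∧
    (∀ a₁ a₂ : A, a₁ - a₂ ∈ J → E a₁ - E a₂ ∈ J ∩ D) ∧
    (∀ a : A, E (star a * a) ∈ J → a ∈ J) := by
  let _ : NonUnitalCStarAlgebra A := {}
  exact cartan_quotient_aux hD J hJ
end

section
/- Let B ⊆ A be an inclusion of C*-algebras such that the primitive ideal space Prim(A) with the hull-kernel topology is semiregular (has a basis of regular open sets). Then B has the ideal intersection property in A if and only if B has the regular ideal intersection property in A. -/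
variable {A : Type*} [NonUnitalNormedRing A] [StarRing A] [CStarRing A] [CompleteSpace A]
  [NormedSpace ℂ A] [IsScalarTower ℂ A A] [SMulCommClass ℂ A A] [StarModule ℂ A]
  [PartialOrder A] [StarOrderedRing A]

universe u

section Prim

variable (A' : Type u) [NonUnitalNormedRing A'] [StarRing A'] [CStarRing A']
  [CompleteSpace A'] [NormedSpace ℂ A'] [IsScalarTower ℂ A' A'] [SMulCommClass ℂ A' A']
  [StarModule ℂ A']

/-- `P` is a primitive ideal of `A'`: the kernel of a nonzero topologically irreducible
representation of `A'` on a Hilbert space. -/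
def IsPrimitiveIdeal (P : Set A') : Prop :=
  ∃ (H : Type u) (_ : NormedAddCommGroup H) (_ : InnerProductSpace ℂ H)
    (_ : CompleteSpace H) (π : A' →⋆ₙₐ[ℂ] H →L[ℂ] H),
      (∃ a, π a ≠ 0) ∧
      (∀ K : Submodule ℂ H, IsClosed (K : Set H) →
        (∀ a : A', ∀ x ∈ K, π a x ∈ K) → K = ⊥ ∨ K = ⊤) ∧
      P = {a | π a = 0}

/-- The primitive ideal space of `A'`. -/
def PrimIdealSpace : Type u := {P : Set A' // IsPrimitiveIdeal A' P}

/-- The hull-kernel (Jacobson) topology on the primitive ideal space: the open sets are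
the sets `{P : ¬ I ⊆ P}` for closed two-sided ideals `I`. -/
instance : TopologicalSpace (PrimIdealSpace A') :=
  TopologicalSpace.generateFrom
    {U : Set (PrimIdealSpace A') |
      ∃ I : Set A', IsIdeal I ∧ U = {P : PrimIdealSpace A' | ¬ I ⊆ P.1}}

end Prim

section Helpers

open scoped ComplexOrder InnerProductSpace

/-! ### Damping elements and approximation modulo an ideal -/

/-- A damping element `d = ε(j*j + ε)⁻¹`: it differs from `1` by a multiple of `j*j`, so `a * d` and `a`
agree modulo any ideal containing `j`, while `j * d` is small. -/
lemma exists_damping {U : Type*} [CStarAlgebra U] (j : U) {ε : ℝ} (hε : 0 < ε) :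
    ∃ d u : U, IsSelfAdjoint d ∧ ‖d‖ ≤ 1 ∧ 1 - d = u * (star j * j) ∧ ‖j * d‖ ^ 2 ≤ ε := by
  let _ := CStarAlgebra.spectralOrder U
  have _ := CStarAlgebra.spectralOrderedRing U
  set h : U := star j * j with hh
  have hsa : IsSelfAdjoint h := .star_mul_self j
  have hnn : ∀ t ∈ spectrum ℝ h, 0 ≤ t := fun t ht =>
    spectrum_nonneg_of_nonneg (star_mul_self_nonneg j) ht
  have hc : ContinuousOn (fun t : ℝ => (t + ε)⁻¹) (spectrum ℝ h) :=
    ContinuousOn.inv₀ (by fun_prop) fun t ht => by have := hnn t ht; positivity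
  have hci : ContinuousOn (fun t : ℝ => t) (spectrum ℝ h) := continuousOn_id
  have hc2 : ContinuousOn (fun t : ℝ => ε * (t + ε)⁻¹) (spectrum ℝ h) := by fun_prop
  refine ⟨cfc (fun t : ℝ => ε * (t + ε)⁻¹) h, cfc (fun t : ℝ => (t + ε)⁻¹) h,
    cfc_predicate _ _, ?_, ?_, ?_⟩
  · refine norm_cfc_le zero_le_one fun t ht => ?_
    have := hnn t ht
    rw [Real.norm_of_nonneg (by positivity), ← div_eq_mul_inv, div_le_one (by positivity)]
    linarith
  · have e : cfc (fun t : ℝ => (t + ε)⁻¹) h * h =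
        cfc (fun t : ℝ => (t + ε)⁻¹) h * cfc (fun t : ℝ => t) h := by rw [cfc_id' ℝ h]
    rw [e, ← cfc_mul _ _ h hc hci, ← cfc_one ℝ h,
      ← cfc_sub 1 _ h continuousOn_const hc2]
    refine cfc_congr fun t ht => ?_
    have := hnn t ht
    simp only [Pi.one_apply]
    field_simp
    ring
  · have hd : IsSelfAdjoint (cfc (fun t : ℝ => ε * (t + ε)⁻¹) h) := cfc_predicate _ _
    rw [sq, ← CStarRing.norm_star_mul_self, star_mul, hd.star_eq, mul_assoc, ← mul_assoc (star j),
      ← hh]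
    have e : h * cfc (fun t : ℝ => ε * (t + ε)⁻¹) h =
        cfc (fun t : ℝ => t * (ε * (t + ε)⁻¹)) h := by
      conv_lhs => enter [1]; rw [← cfc_id' ℝ h]
      rw [← cfc_mul _ _ h hci hc2]
    have e2 : ContinuousOn (fun t : ℝ => t * (ε * (t + ε)⁻¹)) (spectrum ℝ h) := hci.mul hc2
    rw [e, ← cfc_mul _ _ h hc2 e2]
    refine norm_cfc_le hε.le fun t ht => ?_
    have := hnn t ht
    rw [Real.norm_of_nonneg (by positivity)]
    have h1 : ε * (t + ε)⁻¹ ≤ 1 := by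
      rw [← div_eq_mul_inv, div_le_one (by positivity)]; linarith
    have h2 : t * (t + ε)⁻¹ ≤ 1 := by
      rw [← div_eq_mul_inv, div_le_one (by positivity)]; linarith
    calc ε * (t + ε)⁻¹ * (t * (ε * (t + ε)⁻¹)) = ε * ((ε * (t + ε)⁻¹) * (t * (t + ε)⁻¹)) := by ring
      _ ≤ ε * (1 * 1) := by gcongr
      _ = ε := by ring

open scoped ComplexStarModule in
lemma norm_coe_realPart_le {U : Type*} [CStarAlgebra U] (x : U) : ‖(ℜ x : U)‖ ≤ ‖x‖ := by
  rw [realPart_apply_coe, norm_smul]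
  have := norm_add_le x (star x)
  rw [norm_star] at this
  norm_num
  linarith

open scoped ComplexStarModule in
/-- If `-a*a` is a limit of sums of a positive element, an element of the closed ideal `I` and a
skew-adjoint element, then `a ∈ I`. Conjugating such an approximation by a damping element `d` makes
the part in `I` small, and taking real parts removes the skew part; positivity then bounds
`‖a * d‖`, while `a - a * d ∈ I`. -/
lemma mem_of_approx {U : Type*} [CStarAlgebra U] [PartialOrder U] [StarOrderedRing U]
    {I : Set U} (hI : IsIdeal I) (a : U)
    (h : ∀ δ > (0 : ℝ), ∃ c j k : U, 0 ≤ c ∧ j ∈ I ∧ star k = -k ∧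
      ‖c + star a * a + j + k‖ < δ) : a ∈ I := by
  rw [← hI.2.closure_eq, Metric.mem_closure_iff]
  intro ε hε
  obtain ⟨c, j, k, hc, hj, hk, hlt⟩ := h (ε ^ 2 / 4) (by positivity)
  obtain ⟨d, u, hd, hd1, hdu, hjd⟩ := exists_damping j (ε := (ε ^ 2 / 4) ^ 2) (by positivity)
  refine ⟨a * (1 - d), ?_, ?_⟩
  · rw [hdu, ← mul_assoc, ← mul_assoc]
    exact (hI.1.2.2 _ j hj).1
  have hjd' : ‖j * d‖ ≤ ε ^ 2 / 4 := le_of_sq_le_sq hjd (by positivity)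
  have e : a - a * (1 - d) = a * d := by noncomm_ring
  rw [dist_eq_norm, e]
  -- The skew part `d * k * d` does not contribute to the real part.
  have key : d * c * d + star (a * d) * (a * d) =
      (ℜ (d * (c + star a * a + j + k) * d) : U) - (ℜ (d * (j * d)) : U) := by
    have hcs : star c = c := (IsSelfAdjoint.of_nonneg hc).star_eq
    set p := d * (c + star a * a + j + k) * d with hp
    set q := d * (j * d) with hq
    set y := d * c * d + star (a * d) * (a * d) with hy
    have h2 : (p + star p) - (q + star q) = y + y := by
      simp only [hp, hq, hy, star_mul, star_add, hd.star_eq, hcs, hk, star_star]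
      noncomm_ring
    rw [realPart_apply_coe, realPart_apply_coe, ← smul_sub, h2, ← two_smul ℝ y, smul_smul]
    norm_num
  have h1 : ‖star (a * d) * (a * d)‖ ≤ ‖d * c * d + star (a * d) * (a * d)‖ := by
    refine CStarAlgebra.norm_le_norm_of_nonneg_of_le (star_mul_self_nonneg _) ?_
    refine le_add_of_nonneg_left ?_
    have := star_left_conjugate_nonneg hc d
    rwa [hd.star_eq] at this
  rw [CStarRing.norm_star_mul_self, key] at h1
  have h3 : ‖d * (c + star a * a + j + k) * d‖ ≤ 1 * ‖c + star a * a + j + k‖ * 1 := by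
    refine (norm_mul_le _ _).trans ?_
    gcongr
    refine (norm_mul_le _ _).trans ?_
    gcongr
  have h4 : ‖d * (j * d)‖ ≤ 1 * ‖j * d‖ := by
    refine (norm_mul_le _ _).trans ?_
    gcongr
  have h5 := norm_sub_le (ℜ (d * (c + star a * a + j + k) * d) : U) (ℜ (d * (j * d)) : U)
  have h6 : ‖(ℜ (d * (c + star a * a + j + k) * d) : U)‖ ≤
      ‖d * (c + star a * a + j + k) * d‖ := norm_coe_realPart_le _
  have h7 : ‖(ℜ (d * (j * d)) : U)‖ ≤ ‖d * (j * d)‖ := norm_coe_realPart_le _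
  have : ‖a * d‖ ^ 2 < ε ^ 2 := by nlinarith
  exact lt_of_pow_lt_pow_left₀ 2 hε.le this

/-! ### States vanishing on an ideal -/

/-- The states of the unital C*-algebra `U` that vanish on `I`, inside the dual with the weak-*
topology. -/
def statesVanishingOn {U : Type*} [CStarAlgebra U] [PartialOrder U] [StarOrderedRing U]
    (I : Set U) : Set (WeakDual ℂ U) :=
  {f | (∀ x : U, 0 ≤ x → 0 ≤ f x) ∧ f 1 = 1 ∧ ∀ x ∈ I, f x = 0}

/-- A functional that is nonnegative on nonnegative elements, as a positive linear map, so that the GNS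
construction applies to it. -/
noncomputable def toPos {U : Type*} [CStarAlgebra U] [PartialOrder U] [StarOrderedRing U]
    (f : WeakDual ℂ U) (hf : ∀ x : U, 0 ≤ x → 0 ≤ f x) : U →ₚ[ℂ] ℂ :=
  PositiveLinearMap.mk₀ ((WeakDual.toStrongDual f : StrongDual ℂ U) : U →ₗ[ℂ] ℂ) hf

lemma toPos_apply {U : Type*} [CStarAlgebra U] [PartialOrder U] [StarOrderedRing U]
    (f : WeakDual ℂ U) (hf : ∀ x : U, 0 ≤ x → 0 ≤ f x) (x : U) : toPos f hf x = f x := rfl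

/-- The Cauchy–Schwarz inequality in the GNS space, applied to the vectors of `1` and `x`. -/
lemma PositiveLinearMap.norm_apply_le_norm_apply_one {U : Type*} [CStarAlgebra U] [PartialOrder U]
    [StarOrderedRing U] (f : U →ₚ[ℂ] ℂ) (x : U) : ‖f x‖ ≤ ‖f 1‖ * ‖x‖ := by
  have h1 := norm_inner_le_norm (𝕜 := ℂ) (f.toPreGNS 1) (f.toPreGNS x)
  have hx : ‖f.toPreGNS x‖ ≤ ‖x‖ * ‖f.toPreGNS 1‖ := by
    have h := (f.leftMulMapPreGNS x).le_of_opNorm_le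
      (LinearMap.mkContinuous_norm_le _ (norm_nonneg x) _) (f.toPreGNS 1)
    simpa using h
  have h2 : ‖f 1‖ = ‖f.toPreGNS 1‖ ^ 2 := by
    have := f.preGNS_norm_sq (f.toPreGNS 1)
    simp only [PositiveLinearMap.ofPreGNS_toPreGNS, star_one, mul_one] at this
    rw [← this]; simp
  rw [PositiveLinearMap.preGNS_inner_def] at h1
  simp only [PositiveLinearMap.ofPreGNS_toPreGNS, star_one, one_mul] at h1
  calc _ ≤ _ := h1
    _ ≤ ‖f.toPreGNS 1‖ * (‖x‖ * ‖f.toPreGNS 1‖) := by gcongr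
    _ = _ := by rw [h2]; ring

lemma isCompact_states {U : Type*} [CStarAlgebra U] [PartialOrder U] [StarOrderedRing U]
    (I : Set U) : IsCompact (statesVanishingOn I) := by
  have hcl : IsClosed (statesVanishingOn I) := by
    have : statesVanishingOn I = (⋂ x : U, ⋂ _ : 0 ≤ x, {f : WeakDual ℂ U | 0 ≤ f x}) ∩
        ({f | f 1 = 1} ∩ ⋂ x ∈ I, {f | f x = 0}) := by
      ext f; simp [statesVanishingOn]
    rw [this]
    refine (isClosed_iInter fun x => isClosed_iInter fun _ => ?_).inter
      (IsClosed.inter ?_ (isClosed_iInter fun x => isClosed_iInter fun _ => ?_))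
    · exact isClosed_le continuous_const (WeakDual.eval_continuous x)
    · exact isClosed_eq (WeakDual.eval_continuous _) continuous_const
    · exact isClosed_eq (WeakDual.eval_continuous _) continuous_const
  refine (WeakDual.isCompact_closedBall (0 : StrongDual ℂ U) 1).of_isClosed_subset hcl ?_
  intro f hf
  simp only [Set.mem_preimage, mem_closedBall_zero_iff]
  refine ContinuousLinearMap.opNorm_le_bound _ zero_le_one fun x => ?_
  have := (toPos f hf.1).norm_apply_le_norm_apply_one x
  rw [toPos_apply, toPos_apply, hf.2.1, norm_one] at this
  exact this

lemma smul_mem_of_isIdeal {U : Type*} [CStarAlgebra U] {I : Set U} (hI : IsIdeal I) (z : ℂ)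
    {x : U} (hx : x ∈ I) : z • x ∈ I := by
  simpa using (hI.1.2.2 (z • 1) x hx).1

/-- Elements outside a closed ideal are detected by states vanishing on it. The proof separates `-a*a`
from the closed cone generated by the positive elements, `I` and the skew-adjoint elements: the
real part of a functional bounded below on this cone is nonnegative on it, hence vanishes on `I` and
on the skew-adjoint elements. -/
lemma exists_state {U : Type*} [CStarAlgebra U] [PartialOrder U] [StarOrderedRing U]
    {I : Set U} (hI : IsIdeal I) {a : U} (ha : a ∉ I) :
    ∃ f ∈ statesVanishingOn I, 0 < (f (star a * a)).re := by
  let C : Set U := {y | ∃ c j k : U, 0 ≤ c ∧ j ∈ I ∧ star k = -k ∧ y = c + j + k}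
  have hC : Convex ℝ C := by
    rintro _ ⟨c, j, k, hc, hj, hk, rfl⟩ _ ⟨c', j', k', hc', hj', hk', rfl⟩ s t hs ht -
    refine ⟨s • c + t • c', s • j + t • j', s • k + t • k', ?_, ?_, ?_, ?_⟩
    · exact add_nonneg (smul_nonneg hs hc) (smul_nonneg ht hc')
    · have e : ∀ (r : ℝ) (x : U), r • x = (r : ℂ) • x := fun r x => (Complex.coe_smul r x).symm
      rw [e, e]
      exact hI.1.2.1 _ (smul_mem_of_isIdeal hI _ hj) _ (smul_mem_of_isIdeal hI _ hj')
    · simp [star_smul, hk, hk', add_comm]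
    · simp only [smul_add]; abel
  have hnot : -(star a * a) ∉ closure C := by
    intro hmem
    refine ha (mem_of_approx hI a fun δ hδ => ?_)
    obtain ⟨_, ⟨c, j, k, hc, hj, hk, rfl⟩, hd⟩ := Metric.mem_closure_iff.1 hmem δ hδ
    refine ⟨c, j, k, hc, hj, hk, ?_⟩
    rw [dist_eq_norm, ← norm_neg] at hd
    have e : c + star a * a + j + k = -(-(star a * a) - (c + j + k)) := by abel
    rwa [e]
  obtain ⟨g, u, hgu, hg⟩ := RCLike.geometric_hahn_banach_point_closed (𝕜 := ℂ)
    hC.closure isClosed_closure hnot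
  change (g _).re < u at hgu
  replace hg : ∀ b ∈ closure C, u < (g b).re := hg
  have h0 : (0 : U) ∈ C := ⟨0, 0, 0, le_rfl, hI.1.1, by simp, by simp⟩
  have hu : u < 0 := by simpa using hg 0 (subset_closure h0)
  -- A linear functional bounded below on a cone is nonnegative there.
  have hpos : ∀ y : U, (∀ r : ℝ, 0 ≤ r → r • y ∈ C) → 0 ≤ (g y).re := by
    intro y hy
    by_contra! hlt
    have := hg _ (subset_closure (hy (u / (g y).re) (div_nonneg_of_nonpos hu.le hlt.le)))
    rw [← Complex.coe_smul, map_smul, smul_eq_mul, Complex.re_ofReal_mul,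
      div_mul_cancel₀ _ hlt.ne] at this
    exact lt_irrefl _ this
  have hskew : ∀ k : U, star k = -k → (g k).re = 0 := by
    have : ∀ k : U, star k = -k → 0 ≤ (g k).re := fun k hk => hpos k fun r _ =>
      ⟨0, 0, r • k, le_rfl, hI.1.1, by simp [star_smul, hk], by simp⟩
    intro k hk
    have h2 := this (-k) (by simp [hk])
    rw [map_neg, Complex.neg_re] at h2
    linarith [this k hk]
  have hgpos : ∀ x : U, 0 ≤ x → 0 ≤ g x := by
    intro x hx
    -- `i x` is skew-adjoint, so `g x` is real.
    have him := hskew (Complex.I • x) (by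
      rw [star_smul, (IsSelfAdjoint.of_nonneg hx).star_eq]; simp)
    rw [map_smul] at him
    simp only [smul_eq_mul, Complex.mul_re, Complex.I_re, Complex.I_im] at him
    rw [Complex.nonneg_iff]
    refine ⟨hpos x fun r hr => ⟨r • x, 0, 0, smul_nonneg hr hx, hI.1.1, by simp, by simp⟩, ?_⟩
    linarith
  -- `I` is a complex subspace, so nonnegativity of the real part forces vanishing.
  have hgI' : ∀ x ∈ I, 0 ≤ (g x).re := fun x hx => hpos x fun r _ =>
    ⟨0, r • x, 0, le_rfl, by
      rw [← Complex.coe_smul]; exact smul_mem_of_isIdeal hI _ hx, by simp, by simp⟩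
  have hgI : ∀ x ∈ I, g x = 0 := by
    intro x hx
    have h1 := hgI' x hx
    have h2 := hgI' _ (smul_mem_of_isIdeal hI (-1) hx)
    have h3 := hgI' _ (smul_mem_of_isIdeal hI Complex.I hx)
    have h4 := hgI' _ (smul_mem_of_isIdeal hI (-Complex.I) hx)
    simp only [map_smul, smul_eq_mul, Complex.mul_re, Complex.neg_re, Complex.neg_im,
      Complex.I_re, Complex.I_im, Complex.one_re, Complex.one_im] at h2 h3 h4
    apply Complex.ext <;> simp <;> linarith
  have hga : 0 < (g (star a * a)).re := by
    rw [map_neg, Complex.neg_re] at hgu; linarith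
  let p : U →ₚ[ℂ] ℂ := PositiveLinearMap.mk₀ (g : U →ₗ[ℂ] ℂ) hgpos
  have hp : ∀ x, p x = g x := fun _ => rfl
  have hg1 : g 1 ≠ 0 := by
    intro h
    have := p.norm_apply_le_norm_apply_one (star a * a)
    rw [hp, hp, h, norm_zero, zero_mul] at this
    rw [norm_le_zero_iff.1 this] at hga
    exact lt_irrefl _ hga
  have hg1pos : 0 < g 1 := lt_of_le_of_ne (hgpos 1 zero_le_one) hg1.symm
  refine ⟨StrongDual.toWeakDual ((g 1)⁻¹ • g), ⟨fun x hx => ?_, ?_, fun x hx => ?_⟩, ?_⟩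
  · exact mul_nonneg (inv_nonneg.2 hg1pos.le) (hgpos x hx)
  · exact inv_mul_cancel₀ hg1
  · change (g 1)⁻¹ * g x = 0
    rw [hgI x hx, mul_zero]
  · have : 0 < (g 1)⁻¹ * g (star a * a) := by
      refine mul_pos (inv_pos.2 hg1pos) (lt_of_le_of_ne (hgpos _ (star_mul_self_nonneg a)) ?_)
      intro h; rw [← h] at hga; exact lt_irrefl _ hga
    exact (Complex.pos_iff.1 this).1

/-- The state in `exists_state` can be chosen extreme among the states vanishing on `I`: the maximizers
of the evaluation at `a*a` form a compact face, and Krein–Milman gives it an extreme point. -/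
lemma exists_extreme_state {U : Type*} [CStarAlgebra U] [PartialOrder U] [StarOrderedRing U]
    {I : Set U} (hI : IsIdeal I) {a : U} (ha : a ∉ I) :
    ∃ f ∈ (statesVanishingOn I).extremePoints ℝ, 0 < (f (star a * a)).re := by
  obtain ⟨f₀, hf₀, hpos⟩ := exists_state hI ha
  have hev : Continuous fun f : WeakDual ℂ U => (f (star a * a)).re :=
    Complex.continuous_re.comp (WeakDual.eval_continuous _)
  obtain ⟨m, hm, hmax⟩ := (isCompact_states I).exists_isMaxOn ⟨f₀, hf₀⟩ hev.continuousOn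
  set F := statesVanishingOn I ∩ {f : WeakDual ℂ U | (f (star a * a)).re = (m (star a * a)).re}
    with hF
  have hFc : IsCompact F := (isCompact_states I).inter_right (isClosed_eq hev continuous_const)
  have hext : IsExtreme ℝ (statesVanishingOn I) F := by
    refine ⟨Set.inter_subset_left, ?_⟩
    rintro x hx y hy z ⟨hz, hz'⟩ ⟨s, t, hs, ht, hst, rfl⟩
    refine ⟨hx, ?_⟩
    have h1 := hmax hx
    have h2 := hmax hy
    have e : ((s • x + t • y) (star a * a)).re =
      s * (x (star a * a)).re + t * (y (star a * a)).re := by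
      change ((s • x (star a * a)) + t • y (star a * a)).re = _
      rw [Complex.add_re, Complex.smul_re, Complex.smul_re, smul_eq_mul, smul_eq_mul]
    change (_ : ℝ) = _ at hz'
    change (_ : ℝ) ≤ _ at h1 h2
    change (_ : ℝ) = _
    rw [e] at hz'
    refine h1.antisymm ?_
    obtain rfl : s = 1 - t := by linarith
    by_contra! hlt
    nlinarith [mul_pos hs (sub_pos.2 hlt), mul_nonneg ht.le (sub_nonneg.2 h2)]
  have : LocallyConvexSpace ℝ (WeakDual ℂ U) :=
    inferInstanceAs (LocallyConvexSpace ℝ (WeakBilin (topDualPairing ℂ U)))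
  obtain ⟨f, hf⟩ := hFc.extremePoints_nonempty ⟨m, hm, rfl⟩
  refine ⟨f, hext.extremePoints_subset_extremePoints hf, ?_⟩
  have h1 : (f (star a * a)).re = _ := (extremePoints_subset hf).2
  rw [h1]
  exact hpos.trans_le (hmax hf₀)

/-! ### Irreducible representations from extreme states -/

lemma inner_self_eq_ofReal {H : Type*} [NormedAddCommGroup H] [InnerProductSpace ℂ H] (v : H) :
    ⟪v, v⟫_ℂ = ((‖v‖ ^ 2 : ℝ) : ℂ) := by
  rw [inner_self_eq_norm_sq_to_K]; push_cast; rfl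

/-- The functional `x ↦ ⟪η, π x η⟫` of a vector `η`, which need not have norm one. -/
noncomputable def vectorFunctional {U H : Type*} [CStarAlgebra U] [NormedAddCommGroup H]
    [InnerProductSpace ℂ H] [CompleteSpace H] (π : U →⋆ₐ[ℂ] (H →L[ℂ] H)) (η : H) :
    WeakDual ℂ U :=
  StrongDual.toWeakDual <| LinearMap.mkContinuous
    { toFun := fun x => ⟪η, π x η⟫_ℂ
      map_add' := fun x y => by simp
      map_smul' := fun c x => by simp } (‖η‖ * ‖η‖) fun x => by
    have h1 : ‖⟪η, π x η⟫_ℂ‖ ≤ ‖η‖ * ‖π x η‖ := norm_inner_le_norm _ _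
    have h2 : ‖π x η‖ ≤ ‖x‖ * ‖η‖ := (π x).le_of_opNorm_le
      (NonUnitalStarAlgHom.norm_apply_le π x) η
    calc ‖⟪η, π x η⟫_ℂ‖ ≤ ‖η‖ * (‖x‖ * ‖η‖) := h1.trans (by gcongr)
      _ = _ := by ring

lemma vectorFunctional_apply {U H : Type*} [CStarAlgebra U] [NormedAddCommGroup H]
    [InnerProductSpace ℂ H] [CompleteSpace H] (π : U →⋆ₐ[ℂ] (H →L[ℂ] H)) (η : H) (x : U) :
    vectorFunctional π η x = ⟪η, π x η⟫_ℂ := rfl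

lemma inner_rep_star {U H : Type*} [CStarAlgebra U] [NormedAddCommGroup H]
    [InnerProductSpace ℂ H] [CompleteSpace H] (π : U →⋆ₐ[ℂ] (H →L[ℂ] H)) (x : U) (v w : H) :
    ⟪v, π (star x) w⟫_ℂ = ⟪π x v, w⟫_ℂ := by
  rw [map_star, ContinuousLinearMap.star_eq_adjoint, ContinuousLinearMap.adjoint_inner_right]

lemma normalized_mem_states {U H : Type*} [CStarAlgebra U] [PartialOrder U] [StarOrderedRing U]
    [NormedAddCommGroup H] [InnerProductSpace ℂ H] [CompleteSpace H]
    (π : U →⋆ₐ[ℂ] (H →L[ℂ] H)) {I : Set U} (hπI : ∀ x ∈ I, π x = 0) {η : H} (hη : η ≠ 0) :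
    (‖η‖ ^ 2)⁻¹ • vectorFunctional π η ∈ statesVanishingOn I := by
  have happ : ∀ x, ((‖η‖ ^ 2)⁻¹ • vectorFunctional π η) x = (‖η‖ ^ 2)⁻¹ • ⟪η, π x η⟫_ℂ :=
    fun _ => rfl
  refine ⟨fun x hx => ?_, ?_, fun x hx => ?_⟩
  · rw [happ]
    refine smul_nonneg (by positivity) ?_
    obtain ⟨y, rfl⟩ := CStarAlgebra.nonneg_iff_eq_star_mul_self.1 hx
    rw [map_mul, mul_apply_eq_comp, inner_rep_star, inner_self_eq_ofReal]
    exact_mod_cast sq_nonneg ‖π y η‖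
  · rw [happ, map_one, one_apply_eq_self, inner_self_eq_ofReal,
      ← Complex.coe_smul]
    have : ‖η‖ ≠ 0 := norm_ne_zero_iff.2 hη
    push_cast
    simp [this]
  · rw [happ, hπI x hx]; simp

lemma eq_top_of_cyclic {U H : Type*} [CStarAlgebra U] [NormedAddCommGroup H]
    [InnerProductSpace ℂ H] [CompleteSpace H] {π : U →⋆ₐ[ℂ] (H →L[ℂ] H)} {ξ : H}
    (hξ : DenseRange fun x => π x ξ) {K : Submodule ℂ H} (hK : IsClosed (K : Set H))
    (hinv : ∀ x, ∀ v ∈ K, π x v ∈ K) (hmem : ξ ∈ K) : K = ⊤ := by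
  refine eq_top_iff.2 fun v _ => ?_
  have : closure (Set.range fun x => π x ξ) ⊆ K :=
    closure_minimal (by rintro _ ⟨x, rfl⟩; exact hinv x ξ hmem) hK
  exact this (hξ v)

/-- If a cyclic vector `ξ` induces an extreme point of the states vanishing on `I`, then the
representation is irreducible. An invariant closed subspace `K` splits `ξ = ξ₁ + ξ₂` along `K ⊕ Kᗮ`,
and the state of `ξ` is the convex combination of the normalized states of `ξ₁` and `ξ₂`. By
extremality these agree, which forces `ξ₁` to be a scalar multiple of `ξ`; then `ξ₁ = 0` or
`ξ₂ = 0`. -/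
lemma irreducible_of_extreme {U H : Type*} [CStarAlgebra U] [PartialOrder U] [StarOrderedRing U]
    [NormedAddCommGroup H] [InnerProductSpace ℂ H] [CompleteSpace H]
    (π : U →⋆ₐ[ℂ] (H →L[ℂ] H)) {I : Set U} (hπI : ∀ x ∈ I, π x = 0) {ξ : H}
    (hξ : DenseRange fun x => π x ξ)
    (hext : vectorFunctional π ξ ∈ (statesVanishingOn I).extremePoints ℝ)
    {K : Submodule ℂ H} (hK : IsClosed (K : Set H)) (hinv : ∀ x, ∀ v ∈ K, π x v ∈ K) :
    K = ⊥ ∨ K = ⊤ := by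
  have : CompleteSpace K := hK.completeSpace_coe
  have hinv' : ∀ x, ∀ v ∈ Kᗮ, π x v ∈ Kᗮ := by
    intro x v hv
    rw [Submodule.mem_orthogonal] at hv ⊢
    intro w hw
    rw [← star_star x, inner_rep_star]
    exact hv _ (hinv _ _ hw)
  set ξ₁ := K.starProjection ξ with h₁
  set ξ₂ := ξ - ξ₁ with h₂
  have hm₁ : ξ₁ ∈ K := K.starProjection_apply_mem ξ
  have hm₂ : ξ₂ ∈ Kᗮ := K.sub_starProjection_mem_orthogonal ξ
  have hsum : ξ = ξ₁ + ξ₂ := by rw [h₂]; abel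
  by_cases hz₁ : ξ₁ = 0
  · left
    have : ξ ∈ Kᗮ := by rw [hsum, hz₁, zero_add]; exact hm₂
    have := eq_top_of_cyclic hξ K.isClosed_orthogonal hinv' this
    rwa [Submodule.orthogonal_eq_top_iff] at this
  by_cases hz₂ : ξ₂ = 0
  · right
    have : ξ ∈ K := by rw [hsum, hz₂, add_zero]; exact hm₁
    exact eq_top_of_cyclic hξ hK hinv this
  exfalso
  have horth : ∀ v ∈ K, ∀ w ∈ Kᗮ, ⟪v, w⟫_ℂ = 0 := fun v hv w hw => hw v hv
  have horth' : ∀ v ∈ K, ∀ w ∈ Kᗮ, ⟪w, v⟫_ℂ = 0 := fun v hv w hw => by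
    rw [← inner_conj_symm, horth v hv w hw, map_zero]
  have hdecomp : ∀ x, ⟪ξ, π x ξ⟫_ℂ = ⟪ξ₁, π x ξ₁⟫_ℂ + ⟪ξ₂, π x ξ₂⟫_ℂ := by
    intro x
    conv_lhs => rw [hsum]
    rw [map_add, inner_add_left, inner_add_right, inner_add_right,
      horth _ hm₁ _ (hinv' x _ hm₂), horth' _ (hinv x _ hm₁) _ hm₂]
    ring
  have hn₁ : ‖ξ₁‖ ≠ 0 := norm_ne_zero_iff.2 hz₁
  have hn₂ : ‖ξ₂‖ ≠ 0 := norm_ne_zero_iff.2 hz₂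
  have hone : ‖ξ₁‖ ^ 2 + ‖ξ₂‖ ^ 2 = 1 := by
    have h := hdecomp 1
    have h' : ⟪ξ, π 1 ξ⟫_ℂ = 1 := hext.1.2.1
    rw [h'] at h
    simp only [map_one, one_apply_eq_self, inner_self_eq_ofReal] at h
    exact_mod_cast h.symm
  have hseg : vectorFunctional π ξ ∈ openSegment ℝ ((‖ξ₁‖ ^ 2)⁻¹ • vectorFunctional π ξ₁)
      ((‖ξ₂‖ ^ 2)⁻¹ • vectorFunctional π ξ₂) := by
    refine ⟨‖ξ₁‖ ^ 2, ‖ξ₂‖ ^ 2, by positivity, by positivity, hone, ?_⟩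
    refine DFunLike.ext _ _ fun x => ?_
    change ‖ξ₁‖ ^ 2 • ((‖ξ₁‖ ^ 2)⁻¹ • ⟪ξ₁, π x ξ₁⟫_ℂ) + ‖ξ₂‖ ^ 2 • ((‖ξ₂‖ ^ 2)⁻¹ • ⟪ξ₂, π x ξ₂⟫_ℂ) =
      ⟪ξ, π x ξ⟫_ℂ
    rw [smul_inv_smul₀ (by positivity), smul_inv_smul₀ (by positivity), hdecomp x]
  have heq := hext.2 (normalized_mem_states π hπI hz₁) (normalized_mem_states π hπI hz₂) hseg
  have hprop : ∀ x, ⟪ξ₁, π x ξ⟫_ℂ = ((‖ξ₁‖ ^ 2 : ℝ) : ℂ) * ⟪ξ, π x ξ⟫_ℂ := by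
    intro x
    have h : (‖ξ₁‖ ^ 2)⁻¹ • ⟪ξ₁, π x ξ₁⟫_ℂ = ⟪ξ, π x ξ⟫_ℂ := DFunLike.congr_fun heq x
    rw [← h, ← Complex.coe_smul, smul_eq_mul, ← mul_assoc, ← Complex.ofReal_mul,
      mul_inv_cancel₀ (by positivity), Complex.ofReal_one, one_mul]
    conv_lhs => rw [hsum, map_add, inner_add_right, horth _ hm₁ _ (hinv' x _ hm₂), add_zero]
  -- By cyclicity, `ξ₁` is a scalar multiple of `ξ`; pairing with `ξ₂` gives a contradiction.
  have hvec : ξ₁ - ((‖ξ₁‖ ^ 2 : ℝ) : ℂ) • ξ = 0 := by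
    refine hξ.eq_zero_of_inner_left (𝕜 := ℂ) ?_
    intro x
    rw [inner_sub_left, inner_smul_left, hprop x, Complex.conj_ofReal, sub_self]
  have hfin : ⟪ξ₂, ξ₁ - ((‖ξ₁‖ ^ 2 : ℝ) : ℂ) • ξ⟫_ℂ = 0 := by rw [hvec, inner_zero_right]
  rw [inner_sub_right, inner_smul_right, hsum, inner_add_right, horth' _ hm₁ _ hm₂,
    inner_self_eq_ofReal] at hfin
  have : ‖ξ₁‖ ^ 2 * ‖ξ₂‖ ^ 2 = 0 := by
    have : ((‖ξ₁‖ ^ 2 * ‖ξ₂‖ ^ 2 : ℝ) : ℂ) = 0 := by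
      push_cast
      simpa using hfin
    exact_mod_cast this
  exact absurd this (by positivity)

/-- The GNS representation of an extreme state vanishing on `I` and positive at `a*a`. -/
lemma exists_irreducible_rep {U : Type u} [CStarAlgebra U] {I : Set U} (hI : IsIdeal I) {a : U}
    (ha : a ∉ I) :
    ∃ (H : Type u) (_ : NormedAddCommGroup H) (_ : InnerProductSpace ℂ H) (_ : CompleteSpace H)
      (π : U →⋆ₐ[ℂ] (H →L[ℂ] H)),
      (∀ K : Submodule ℂ H, IsClosed (K : Set H) → (∀ x, ∀ v ∈ K, π x v ∈ K) → K = ⊥ ∨ K = ⊤) ∧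
      (∀ x ∈ I, π x = 0) ∧ π a ≠ 0 := by
  let _ := CStarAlgebra.spectralOrder U
  have _ := CStarAlgebra.spectralOrderedRing U
  obtain ⟨f, hf, hfa⟩ := exists_extreme_state hI ha
  let p := toPos f hf.1.1
  let π : U →⋆ₐ[ℂ] (p.GNS →L[ℂ] p.GNS) := p.gnsStarAlgHom
  let ξ : p.GNS := (p.toPreGNS 1 : p.PreGNS)
  have hπξ : ∀ x, π x ξ = ((p.toPreGNS x : p.PreGNS) : p.GNS) := by
    intro x
    change p.gnsNonUnitalStarAlgHom x _ = _
    rw [PositiveLinearMap.gnsNonUnitalStarAlgHom_apply_coe]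
    simp
  have hdense : DenseRange fun x => π x ξ := by
    simp only [hπξ]
    exact UniformSpace.Completion.denseRange_coe.comp p.toPreGNS.surjective.denseRange
      (UniformSpace.Completion.continuous_coe _)
  have hfξ : vectorFunctional π ξ = f := by
    refine DFunLike.ext _ _ fun x => ?_
    rw [vectorFunctional_apply, hπξ]
    change ⟪((p.toPreGNS 1 : p.PreGNS) : p.GNS), _⟫_ℂ = _
    rw [UniformSpace.Completion.inner_coe, PositiveLinearMap.preGNS_inner_def]
    simp [p, toPos_apply]
  have hnorm : ∀ x, ((‖π x ξ‖ ^ 2 : ℝ) : ℂ) = f (star x * x) := by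
    intro x
    rw [← hfξ, vectorFunctional_apply, map_mul, mul_apply_eq_comp, inner_rep_star,
      inner_self_eq_ofReal]
  have hπI : ∀ x ∈ I, π x = 0 := by
    intro x hx
    refine ContinuousLinearMap.ext fun v => ?_
    refine congrFun (hdense.equalizer (π x).continuous (continuous_const (y := (0 : p.GNS))) ?_) v
    funext y
    have h := hnorm (x * y)
    rw [hf.1.2.2 _ (hI.1.2.2 _ _ (hI.1.2.2 _ _ hx).2).1] at h
    have h0 : ‖π (x * y) ξ‖ ^ 2 = 0 := by exact_mod_cast h
    simpa using h0
  refine ⟨p.GNS, inferInstance, inferInstance, inferInstance, π, fun K hK hinv => ?_, hπI, ?_⟩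
  · exact irreducible_of_extreme π hπI hdense (hfξ ▸ hf) hK hinv
  · intro h
    have := hnorm a
    rw [h] at this
    rw [← this] at hfa
    simp at hfa

/-- A closed ideal of a C*-algebra is the intersection of the primitive ideals containing it. The
unital case is applied to the image of `J` in the unitization. -/
lemma exists_primitive {A : Type u} [NonUnitalCStarAlgebra A] {J : Set A} (hJ : IsIdeal J)
    {a : A} (ha : a ∉ J) : ∃ P : Set A, IsPrimitiveIdeal A P ∧ J ⊆ P ∧ a ∉ P := by
  let _ := CStarAlgebra.spectralOrder A
  have _ := CStarAlgebra.spectralOrderedRing A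
  -- `J` absorbs scalars, since `z • x` is the limit of `x * (z • e)` along an approximate unit.
  have hsmul : ∀ (z : ℂ), ∀ x ∈ J, z • x ∈ J := by
    intro z x hx
    have hau := CStarAlgebra.increasingApproximateUnit A
    have := hau.neBot
    refine hJ.2.mem_of_tendsto (hau.tendsto_mul_left (z • x)) (Filter.Eventually.of_forall ?_)
    intro e
    simp only [smul_mul_assoc, ← mul_smul_comm]
    exact (hJ.1.2.2 _ x hx).2
  have hI : IsIdeal ((fun x : A => (x : Unitization ℂ A)) '' J) := by
    refine ⟨⟨⟨0, hJ.1.1, by simp⟩, ?_, ?_⟩, ?_⟩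
    · rintro _ ⟨x, hx, rfl⟩ _ ⟨y, hy, rfl⟩
      exact ⟨x + y, hJ.1.2.1 x hx y hy, by simp⟩
    · rintro u _ ⟨x, hx, rfl⟩
      induction u with
      | inl_add_inr z b =>
        refine ⟨⟨z • x + b * x, hJ.1.2.1 _ (hsmul z x hx) _ (hJ.1.2.2 b x hx).1, ?_⟩,
          ⟨z • x + x * b, hJ.1.2.1 _ (hsmul z x hx) _ (hJ.1.2.2 b x hx).2, ?_⟩⟩
        · simp [add_mul, Unitization.inl_mul_inr]
        · simp [mul_add, Unitization.inr_mul_inl]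
    · exact (Unitization.isometry_inr (𝕜 := ℂ) (A := A)).isClosedEmbedding.isClosedMap _ hJ.2
  have ha' : (a : Unitization ℂ A) ∉ (fun x : A => (x : Unitization ℂ A)) '' J := by
    rintro ⟨x, hx, h⟩
    exact ha (Unitization.inr_injective h ▸ hx)
  obtain ⟨H, _, _, _, π, hirr, hπI, hπa⟩ := exists_irreducible_rep hI ha'
  let ρ : A →⋆ₙₐ[ℂ] (H →L[ℂ] H) :=
    (π : Unitization ℂ A →⋆ₙₐ[ℂ] (H →L[ℂ] H)).comp (Unitization.inrNonUnitalStarAlgHom ℂ A)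
  have hρ : ∀ x, ρ x = π (x : Unitization ℂ A) := fun _ => rfl
  refine ⟨{x | ρ x = 0}, ⟨H, _, _, ‹_›, ρ, ⟨a, hπa⟩, fun K hK hinv => hirr K hK ?_, rfl⟩,
    fun x hx => hπI _ ⟨x, hx, rfl⟩, hπa⟩
  -- A subspace invariant under `A` is invariant under its unitization.
  intro u v hv
  induction u with
  | inl_add_inr z b =>
    have : π (Unitization.inl z + (b : Unitization ℂ A)) v = z • v + ρ b v := by
      rw [map_add, hρ]
      have : (Unitization.inl z : Unitization ℂ A) = algebraMap ℂ _ z := rfl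
      rw [this, AlgHomClass.commutes, Algebra.algebraMap_eq_smul_one]
      simp
    rw [this]
    exact K.add_mem (K.smul_mem z hv) (hinv b v hv)

/-! ### The hull-kernel topology and regular ideals -/

lemma IsPrimitiveIdeal.isIdeal {A : Type u} [NonUnitalCStarAlgebra A] {P : Set A}
    (hP : IsPrimitiveIdeal A P) : IsIdeal P := by
  obtain ⟨H, _, _, _, π, -, -, rfl⟩ := hP
  refine ⟨⟨map_zero π, fun x hx y hy => ?_, fun a x hx => ⟨?_, ?_⟩⟩, ?_⟩
  · change π (x + y) = 0
    rw [map_add, hx, hy, add_zero]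
  · change π (a * x) = 0
    rw [map_mul, hx, mul_zero]
  · change π (x * a) = 0
    rw [map_mul, hx, zero_mul]
  · have hπ : Continuous π := AddMonoidHomClass.continuous_of_bound π 1 fun x => by
      simpa using NonUnitalStarAlgHom.norm_apply_le π x
    exact isClosed_eq hπ continuous_const

/-- Primitive ideals are prime: if `I * a ⊆ P` and `I ⊄ P`, then `a ∈ P`. The vectors annihilated by
`I` form an invariant closed subspace, which is zero by irreducibility and contains the range
of `a`. -/
lemma IsPrimitiveIdeal.mem_of_mul_mem {A : Type u} [NonUnitalCStarAlgebra A] {P : Set A}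
    (hP : IsPrimitiveIdeal A P) {I : Set A} (hI : IsAlgIdeal I) (hIP : ¬ I ⊆ P) {a : A}
    (ha : ∀ i ∈ I, i * a ∈ P) : a ∈ P := by
  obtain ⟨H, _, _, _, π, -, hirr, rfl⟩ := hP
  let N : Submodule ℂ H := ⨅ i ∈ I, LinearMap.ker (π i : H →ₗ[ℂ] H)
  have hN : ∀ v, v ∈ N ↔ ∀ i ∈ I, π i v = 0 := fun v => by simp [N]
  have hNc : IsClosed (N : Set H) := by
    have : (N : Set H) = ⋂ i ∈ I, {v | π i v = 0} := by ext v; simp [hN]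
    rw [this]
    exact isClosed_biInter fun i _ => isClosed_eq (π i).continuous continuous_const
  have hNinv : ∀ b : A, ∀ v ∈ N, π b v ∈ N := by
    intro b v hv
    rw [hN] at hv ⊢
    intro i hi
    have := hv _ (hI.2.2 b i hi).2
    rwa [map_mul] at this
  rcases hirr N hNc hNinv with h | h
  · refine ContinuousLinearMap.ext fun v => ?_
    have : π a v ∈ N := (hN _).2 fun i hi => by
      have h1 : π (i * a) = 0 := ha i hi
      rw [map_mul] at h1
      exact DFunLike.congr_fun h1 v
    rw [h, Submodule.mem_bot] at this
    exact this
  · refine absurd (fun i hi => ContinuousLinearMap.ext fun v => ?_) hIP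
    exact (hN v).1 (h ▸ Submodule.mem_top) i hi

/-- The primitive ideals that do not contain `I`: the complement of the hull of `I`. -/
def supportOf {A : Type u} [NonUnitalCStarAlgebra A] (I : Set A) : Set (PrimIdealSpace A) :=
  {P | ¬ I ⊆ P.1}

/-- The kernel of a set `S` of primitive ideals, that is, the intersection of its members; it is the
whole algebra when `S` is empty. -/
def kernelOf {A : Type u} [NonUnitalCStarAlgebra A] (S : Set (PrimIdealSpace A)) : Set A :=
  {a | ∀ P ∈ S, a ∈ P.1}

lemma isOpen_supportOf {A : Type u} [NonUnitalCStarAlgebra A] {I : Set A} (hI : IsIdeal I) :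
    IsOpen (supportOf I) :=
  TopologicalSpace.GenerateOpen.basic _ ⟨I, hI, rfl⟩

lemma isIdeal_kernelOf {A : Type u} [NonUnitalCStarAlgebra A] (S : Set (PrimIdealSpace A)) :
    IsIdeal (kernelOf S) := by
  refine ⟨⟨fun P _ => P.2.isIdeal.1.1, fun x hx y hy P hP => P.2.isIdeal.1.2.1 x (hx P hP) y
    (hy P hP), fun a x hx => ⟨fun P hP => (P.2.isIdeal.1.2.2 a x (hx P hP)).1,
    fun P hP => (P.2.isIdeal.1.2.2 a x (hx P hP)).2⟩⟩, ?_⟩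
  have : kernelOf S = ⋂ P ∈ S, P.1 := by ext; simp [kernelOf]
  rw [this]
  exact isClosed_biInter fun P _ => P.2.isIdeal.2

/-- The generating sets of the hull-kernel topology form a basis. For intersections this is the
primeness of primitive ideals. -/
lemma exists_supportOf_subset {A : Type u} [NonUnitalCStarAlgebra A] {W : Set (PrimIdealSpace A)}
    (hW : IsOpen W) {P : PrimIdealSpace A} (hP : P ∈ W) :
    ∃ I : Set A, IsIdeal I ∧ P ∈ supportOf I ∧ supportOf I ⊆ W := by
  induction hW with
  | basic s hs =>
    obtain ⟨I, hI, rfl⟩ := hs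
    exact ⟨I, hI, hP, subset_rfl⟩
  | univ =>
    refine ⟨Set.univ, ⟨⟨trivial, fun _ _ _ _ => trivial, fun _ _ _ => ⟨trivial, trivial⟩⟩,
      isClosed_univ⟩, fun h => ?_, Set.subset_univ _⟩
    obtain ⟨H, _, _, _, π, ⟨a, ha⟩, -, hPπ⟩ := P.2
    have : a ∈ P.1 := h (Set.mem_univ a)
    rw [hPπ] at this
    exact ha this
  | inter s t _ _ ihs iht =>
    obtain ⟨I₁, hI₁, hP₁, hs⟩ := ihs hP.1
    obtain ⟨I₂, hI₂, hP₂, ht⟩ := iht hP.2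
    refine ⟨I₁ ∩ I₂, ⟨⟨⟨hI₁.1.1, hI₂.1.1⟩, fun x hx y hy => ⟨hI₁.1.2.1 x hx.1 y hy.1,
      hI₂.1.2.1 x hx.2 y hy.2⟩, fun a x hx => ⟨⟨(hI₁.1.2.2 a x hx.1).1, (hI₂.1.2.2 a x hx.2).1⟩,
      ⟨(hI₁.1.2.2 a x hx.1).2, (hI₂.1.2.2 a x hx.2).2⟩⟩⟩, hI₁.2.inter hI₂.2⟩, fun h => ?_,
      fun Q hQ => ⟨hs fun h => hQ (Set.inter_subset_left.trans h),
        ht fun h => hQ (Set.inter_subset_right.trans h)⟩⟩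
    exact hP₂ fun x hx => P.2.mem_of_mul_mem hI₁.1 hP₁ fun i hi =>
      h ⟨(hI₁.1.2.2 x i hi).2, (hI₂.1.2.2 i x hx).1⟩
  | sUnion S _ ih =>
    obtain ⟨s, hs, hPs⟩ := hP
    obtain ⟨I, hI, hPI, hIs⟩ := ih s hs hPs
    exact ⟨I, hI, hPI, hIs.trans (Set.subset_sUnion_of_mem hs)⟩

lemma subset_kernelOf_compl {A : Type u} [NonUnitalCStarAlgebra A] {I : Set A}
    {W : Set (PrimIdealSpace A)} (h : supportOf I ⊆ W) : I ⊆ kernelOf Wᶜ := by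
  intro a ha P hP
  by_contra hn
  exact hP (h fun hI => hn (hI ha))

lemma eq_zero_of_forall_mem {A : Type u} [NonUnitalCStarAlgebra A] {a : A}
    (h : ∀ P : PrimIdealSpace A, a ∈ P.1) : a = 0 := by
  by_contra ha
  have h0 : IsIdeal ({0} : Set A) := by
    refine ⟨⟨rfl, ?_, ?_⟩, isClosed_singleton⟩
    · rintro _ rfl _ rfl; simp
    · rintro a _ rfl; simp
  obtain ⟨P, hP, -, haP⟩ := exists_primitive h0 ha
  exact haP (h ⟨P, hP⟩)

/-- For `W` open, the kernel of `W` is the annihilator of the kernel of the complement of `W`. The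
product of the two kernels lies in every primitive ideal, hence vanishes; the reverse inclusion uses
primeness, as each `P ∈ W` fails to contain some ideal inside the kernel of `Wᶜ`. -/
lemma kernelOf_eq_ann {A : Type u} [NonUnitalCStarAlgebra A] {W : Set (PrimIdealSpace A)}
    (hW : IsOpen W) : kernelOf W = ann (kernelOf Wᶜ) := by
  ext a
  constructor
  · intro ha x hx
    constructor
    all_goals
      refine eq_zero_of_forall_mem fun P => ?_
      by_cases hP : P ∈ W
    · exact (P.2.isIdeal.1.2.2 x a (ha P hP)).2
    · exact (P.2.isIdeal.1.2.2 a x (hx P hP)).1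
    · exact (P.2.isIdeal.1.2.2 x a (ha P hP)).1
    · exact (P.2.isIdeal.1.2.2 a x (hx P hP)).2
  · intro ha P hP
    obtain ⟨I, hI, hPI, hIW⟩ := exists_supportOf_subset hW hP
    refine P.2.mem_of_mul_mem hI.1 hPI fun i hi => ?_
    rw [(ha i (subset_kernelOf_compl hIW hi)).2]
    exact P.2.isIdeal.1.1

lemma ann_ann_ann {A : Type*} [NonUnitalNonAssocSemiring A] (X : Set A) :
    ann (ann (ann X)) = ann X := by
  have hsub : ∀ Y : Set A, Y ⊆ ann (ann Y) := fun Y y hy z hz => ⟨(hz y hy).2, (hz y hy).1⟩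
  exact Set.Subset.antisymm (fun a ha x hx => ha x (hsub X hx)) (hsub _)

/-- The ideal corresponding to a regular open set is regular, being an annihilator. -/
lemma isRegularIdeal_kernelOf_compl {A : Type u} [NonUnitalCStarAlgebra A]
    {V : Set (PrimIdealSpace A)} (hV : V = interior (closure V)) :
    IsRegularIdeal (kernelOf Vᶜ) := by
  -- The exterior of `V` is dense in the complement of `V`, so both have the same kernel.
  have hker : kernelOf Vᶜ = kernelOf (closure V)ᶜ := by
    refine Set.Subset.antisymm (fun a ha P hP => ha P fun h => hP (subset_closure h)) ?_
    intro a ha P hP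
    by_contra haP
    refine hP ?_
    rw [hV]
    refine mem_interior.2 ⟨supportOf (kernelOf (closure V)ᶜ), ?_,
      isOpen_supportOf (isIdeal_kernelOf _), fun h => haP (h ha)⟩
    intro Q hQ
    by_contra hn
    exact hQ fun b hb => hb Q hn
  refine ⟨isIdeal_kernelOf _, ?_⟩
  rw [hker, kernelOf_eq_ann isClosed_closure.isOpen_compl, ann_ann_ann]

/-- When the primitive ideal space is semiregular, every nonzero closed ideal contains a nonzero regular
ideal. -/
lemma exists_regular_subideal {A : Type u} [NonUnitalCStarAlgebra A]
    (hsemireg : TopologicalSpace.IsTopologicalBasis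
      {U : Set (PrimIdealSpace A) | IsOpen U ∧ U = interior (closure U)})
    {J : Set A} (hJ : IsIdeal J) (hne : J ≠ {0}) :
    ∃ K : Set A, IsRegularIdeal K ∧ K ≠ {0} ∧ K ⊆ J := by
  obtain ⟨x, hx, hx0⟩ : ∃ x ∈ J, x ≠ 0 := by
    by_contra! h
    exact hne (Set.eq_singleton_iff_unique_mem.2 ⟨hJ.1.1, h⟩)
  obtain ⟨P, hP⟩ : ∃ P : PrimIdealSpace A, x ∉ P.1 := by
    by_contra! h
    exact hx0 (eq_zero_of_forall_mem h)
  obtain ⟨V, ⟨hVo, hVr⟩, hPV, hVJ⟩ :=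
    hsemireg.exists_subset_of_mem_open (show P ∈ supportOf J from fun h => hP (h hx))
      (isOpen_supportOf hJ)
  refine ⟨kernelOf Vᶜ, isRegularIdeal_kernelOf_compl hVr, fun h0 => ?_, fun a ha => ?_⟩
  · obtain ⟨I, hI, hPI, hIV⟩ := exists_supportOf_subset hVo hPV
    refine hPI ((subset_kernelOf_compl hIV).trans ?_)
    rw [h0, Set.singleton_subset_iff]
    exact P.2.isIdeal.1.1
  · by_contra haJ
    obtain ⟨Q, hQ, hJQ, haQ⟩ := exists_primitive hJ haJ
    exact haQ (ha ⟨Q, hQ⟩ fun hQV => hVJ hQV hJQ)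

end Helpers

/-- If the primitive ideal space of `A` with the hull-kernel topology is
semiregular (the regular open sets form a basis), then an inclusion `B ⊆ A` has the ideal
intersection property iff it has the regular ideal intersection property. -/
theorem iip_iff_riip_of_semiregular {A : Type u} [NonUnitalNormedRing A] [StarRing A]
    [CStarRing A] [CompleteSpace A] [NormedSpace ℂ A] [IsScalarTower ℂ A A]
    [SMulCommClass ℂ A A] [StarModule ℂ A] [PartialOrder A] [StarOrderedRing A]
    (B : Set A) (hB : IsCStarInclusion B)
    (hsemireg : TopologicalSpace.IsTopologicalBasis
      {U : Set (PrimIdealSpace A) | IsOpen U ∧ U = interior (closure U)}) :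
    HasIIP B ↔ HasRIIP B := by
  refine ⟨fun h J hJ hne => h J hJ.1 hne, fun h J hJ hne => ?_⟩
  let _ : NonUnitalCStarAlgebra A := { }
  obtain ⟨K, hK, hK0, hKJ⟩ := exists_regular_subideal hsemireg hJ hne
  obtain ⟨x, hx, hx0⟩ := h K hK hK0
  exact ⟨x, ⟨hKJ hx.1, hx.2⟩, hx0⟩
end
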